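/- arXiv:1412.4137 — 4 statements merged into one kernel-verified Lean document; each statement's English description precedes it below -/
import Mathlib

section
/- There is a group isomorphism ψ : G → Γ such that ψ(u) = JR₁J⁻¹, ψ(v) = A₁ and ψ(b) = R₁. -/
/-!
The isomorphism rests on the identity `J = R₁ (J R₁ J⁻¹) A₁`, valid in `Γ` because
`A₁ = (J R₁⁻¹ J)²` and `J³ = 1`. It shows that the inverse of `ψ` must send `J ↦ buv`, `R₁ ↦ b`,
`A₁ ↦ v`, so it remains to compare relations.

In `Γ`, put `R = R₁`, `S = J R J⁻¹`, `A = A₁`. Then `(RSA)³ = J³ = 1`, and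
`(RSAS)² A = (JS)² A = J S J R⁻¹ J = J³ = 1`. The relation `(SA)² = (AS)²` follows after left
multiplication by `R`, since both sides become `J R⁻¹ J⁻²`.

In `G`, put `J = buv`. The relation `(buvu)² v = 1` reads `J u J b⁻¹ J = 1`, which with `J³ = 1`
gives `u = J b J⁻¹`. Moreover `J b⁻¹ J = P v` with `P = buvu` and `v = P⁻²`, so `P` commutes
with `v` and `(J b⁻¹ J)² = P² v² = v`.
-/

/-- Generators of the Cartwright–Steger lattice presentation. -/
inductive CSgen : Type
  | u : CSgen
  | v : CSgen
  | b : CSgen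

open FreeGroup in
/-- Relators of the Cartwright–Steger lattice:
`u³ = v⁴ = b³ = 1`, `(uv)² = (vu)²`, `vb = bv`, `(buv)³ = 1`, `(buvu)²v = 1`. -/
def csRels : Set (FreeGroup CSgen) :=
  { (of CSgen.u) ^ 3,
    (of CSgen.v) ^ 4,
    (of CSgen.b) ^ 3,
    (of CSgen.u * of CSgen.v) ^ 2 * ((of CSgen.v * of CSgen.u) ^ 2)⁻¹,
    of CSgen.v * of CSgen.b * (of CSgen.b * of CSgen.v)⁻¹,
    (of CSgen.b * of CSgen.u * of CSgen.v) ^ 3,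
    (of CSgen.b * of CSgen.u * of CSgen.v * of CSgen.u) ^ 2 * of CSgen.v }

/-- The Cartwright–Steger lattice, as an abstract presented group. -/
abbrev CS : Type := PresentedGroup csRels

def gu : CS := PresentedGroup.of CSgen.u
def gv : CS := PresentedGroup.of CSgen.v
def gb : CS := PresentedGroup.of CSgen.b
/-- `j = (uv)²`. -/
def gj : CS := (gu * gv) ^ 2

/-- Generators of Mostow's group `Γ_{3,4}`. -/
inductive Mgen : Type
  | J : Mgen
  | R1 : Mgen
  | A1 : Mgen

open FreeGroup in
/-- Relators of Mostow's group `Γ_{3,4}`: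
`J³ = R₁³ = A₁⁴ = 1`, `A₁ = (JR₁⁻¹J)²`, `A₁R₁ = R₁A₁`. -/
def mostowRels : Set (FreeGroup Mgen) :=
  { (of Mgen.J) ^ 3,
    (of Mgen.R1) ^ 3,
    (of Mgen.A1) ^ 4,
    of Mgen.A1 * ((of Mgen.J * (of Mgen.R1)⁻¹ * of Mgen.J) ^ 2)⁻¹,
    of Mgen.A1 * of Mgen.R1 * (of Mgen.R1 * of Mgen.A1)⁻¹ }

/-- Mostow's group `Γ_{3,4}`. -/
abbrev Mostow : Type := PresentedGroup mostowRels

def mJ : Mostow := PresentedGroup.of Mgen.J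
def mR1 : Mostow := PresentedGroup.of Mgen.R1
def mA1 : Mostow := PresentedGroup.of Mgen.A1

/-- The key identity: `J` is recovered as the product of the images of `b`, `u` and `v`. -/
lemma mostow_J_eq {H : Type*} [Group H] {J R A : H} (hJ : J ^ 3 = 1)
    (hA : A = (J * R⁻¹ * J) ^ 2) : R * (J * R * J⁻¹) * A = J := by
  calc R * (J * R * J⁻¹) * A = R * J ^ 3 * R⁻¹ * J := by rw [hA]; simp only [pow_succ, pow_zero, one_mul]; group
    _ = J := by rw [hJ]; group

lemma mostow_uv {H : Type*} [Group H] {J R A : H} (hJ : J ^ 3 = 1)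
    (hA : A = (J * R⁻¹ * J) ^ 2) (hAR : A * R = R * A) :
    (J * R * J⁻¹ * A) ^ 2 = (A * (J * R * J⁻¹)) ^ 2 := by
  have hJJ : J * J = J⁻¹ := eq_inv_of_mul_eq_one_left (by rw [← hJ, pow_succ, pow_two])
  have hJi : J⁻¹ * J⁻¹ = J := by rw [← mul_inv_rev, hJJ, inv_inv]
  have h := mostow_J_eq hJ hA
  have hSA : J * R * J⁻¹ * A = R⁻¹ * J := by
    rw [eq_inv_mul_iff_mul_eq, ← mul_assoc, h]
  have hA' : A = J * R⁻¹ * J⁻¹ * R⁻¹ * J := by rw [hA, ← hJJ]; simp only [pow_two, mul_assoc]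
  apply mul_left_cancel (a := R)
  calc R * (J * R * J⁻¹ * A) ^ 2 = J * R⁻¹ * J := by rw [hSA, pow_two]; group
    _ = J * R⁻¹ * (J⁻¹ * J⁻¹) := by rw [hJi]
    _ = J * R⁻¹ * J⁻¹ * R⁻¹ * J ^ 3 * R * J⁻¹ := by rw [hJ]; group
    _ = (J * R⁻¹ * J⁻¹ * R⁻¹ * J) * (J * (J * R * J⁻¹)) := by
      simp only [pow_succ, pow_zero, one_mul, mul_assoc]
    _ = A * ((R * (J * R * J⁻¹) * A) * (J * R * J⁻¹)) := by rw [h, ← hA']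
    _ = (A * R) * (J * R * J⁻¹) * A * (J * R * J⁻¹) := by simp only [mul_assoc]
    _ = R * (A * (J * R * J⁻¹)) ^ 2 := by rw [hAR]; simp only [pow_two, mul_assoc]

lemma mostow_last {H : Type*} [Group H] {J R A : H} (hJ : J ^ 3 = 1)
    (hA : A = (J * R⁻¹ * J) ^ 2) :
    (R * (J * R * J⁻¹) * A * (J * R * J⁻¹)) ^ 2 * A = 1 := by
  have h := mostow_J_eq hJ hA
  have hSA : J * R * J⁻¹ * A = R⁻¹ * J := by
    rw [eq_inv_mul_iff_mul_eq, ← mul_assoc, h]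
  calc (R * (J * R * J⁻¹) * A * (J * R * J⁻¹)) ^ 2 * A
      = J * (J * R * J⁻¹) * J * (J * R * J⁻¹ * A) := by rw [h]; simp only [pow_two, mul_assoc]
    _ = J ^ 3 := by rw [hSA, pow_succ, pow_two]; group
    _ = 1 := hJ

lemma cs_u_eq {H : Type*} [Group H] {u v b : H} (h3 : (b * u * v) ^ 3 = 1)
    (h : (b * u * v * u) ^ 2 * v = 1) : (b * u * v) * b * (b * u * v)⁻¹ = u := by
  -- `h` in the form `J u J b⁻¹ J = 1`, where `J = buv`.
  have h' : (b * u * v) * u * (b * u * v) * b⁻¹ * (b * u * v) = 1 := by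
    rw [← h]; simp only [pow_two]; group
  generalize b * u * v = J at h3 h'
  have hu : u = J⁻¹ * 1 * J⁻¹ * b * J⁻¹ := by rw [← h']; group
  calc J * b * J⁻¹ = J ^ 3 * (J⁻¹ * 1 * J⁻¹ * b * J⁻¹) := by group
    _ = u := by rw [h3, one_mul, ← hu]

lemma cs_v_eq {H : Type*} [Group H] {u v b : H} (h : (b * u * v * u) ^ 2 * v = 1) :
    (b * u * v * b⁻¹ * (b * u * v)) ^ 2 = v := by
  have e : b * u * v * b⁻¹ * (b * u * v) = b * u * v * u * v := by group
  rw [e]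
  generalize b * u * v * u = P at h
  have hv : v = (P ^ 2)⁻¹ := eq_inv_of_mul_eq_one_right h
  rw [hv]
  simp only [pow_two]; group

/-- The assignment `u ↦ J R₁ J⁻¹`, `v ↦ A₁`, `b ↦ R₁` on the generators of `G`. -/
def csToMostowGen : CSgen → Mostow
  | .u => mJ * mR1 * mJ⁻¹
  | .v => mA1
  | .b => mR1

/-- The assignment `J ↦ buv`, `R₁ ↦ b`, `A₁ ↦ v` on the generators of `Γ`. -/
def mostowToCSGen : Mgen → CS
  | .J => gb * gu * gv
  | .R1 => gb
  | .A1 => gv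

open FreeGroup (of) in
open PresentedGroup (one_of_mem mk_eq_mk_of_mul_inv_mem) in
lemma mostow_relations : mJ ^ 3 = 1 ∧ mR1 ^ 3 = 1 ∧ mA1 ^ 4 = 1 ∧
    mA1 = (mJ * mR1⁻¹ * mJ) ^ 2 ∧ mA1 * mR1 = mR1 * mA1 := by
  refine ⟨one_of_mem (rels := mostowRels) (x := of Mgen.J ^ 3) ?_,
    one_of_mem (rels := mostowRels) (x := of Mgen.R1 ^ 3) ?_,
    one_of_mem (rels := mostowRels) (x := of Mgen.A1 ^ 4) ?_,
    mk_eq_mk_of_mul_inv_mem (rels := mostowRels) (x := of Mgen.A1)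
      (y := (of Mgen.J * (of Mgen.R1)⁻¹ * of Mgen.J) ^ 2) ?_,
    mk_eq_mk_of_mul_inv_mem (rels := mostowRels) (x := of Mgen.A1 * of Mgen.R1)
      (y := of Mgen.R1 * of Mgen.A1) ?_⟩ <;>
  simp only [mostowRels, Set.mem_insert_iff, Set.mem_singleton_iff, true_or, or_true]

open FreeGroup (of) in
open PresentedGroup (one_of_mem mk_eq_mk_of_mul_inv_mem) in
lemma cs_relations : gv ^ 4 = 1 ∧ gb ^ 3 = 1 ∧ gv * gb = gb * gv ∧
    (gb * gu * gv) ^ 3 = 1 ∧ (gb * gu * gv * gu) ^ 2 * gv = 1 := by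
  refine ⟨one_of_mem (rels := csRels) (x := of CSgen.v ^ 4) ?_,
    one_of_mem (rels := csRels) (x := of CSgen.b ^ 3) ?_,
    mk_eq_mk_of_mul_inv_mem (rels := csRels) (x := of CSgen.v * of CSgen.b)
      (y := of CSgen.b * of CSgen.v) ?_,
    one_of_mem (rels := csRels) (x := (of CSgen.b * of CSgen.u * of CSgen.v) ^ 3) ?_,
    one_of_mem (rels := csRels)
      (x := (of CSgen.b * of CSgen.u * of CSgen.v * of CSgen.u) ^ 2 * of CSgen.v) ?_⟩ <;>
  simp only [csRels, Set.mem_insert_iff, Set.mem_singleton_iff, true_or, or_true]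

lemma csToMostowGen_rels : ∀ r ∈ csRels, FreeGroup.lift csToMostowGen r = 1 := by
  obtain ⟨hJ, hR, hA4, hA, hAR⟩ := mostow_relations
  intro r hr
  simp only [csRels, Set.mem_insert_iff, Set.mem_singleton_iff] at hr
  rcases hr with rfl | rfl | rfl | rfl | rfl | rfl | rfl <;>
    simp only [map_mul, map_pow, map_inv, FreeGroup.lift_apply_of, csToMostowGen]
  · rw [conj_pow, hR, mul_one, mul_inv_cancel]
  · exact hA4
  · exact hR
  · exact mul_inv_eq_one.mpr (mostow_uv hJ hA hAR)
  · exact mul_inv_eq_one.mpr hAR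
  · rw [mostow_J_eq hJ hA, hJ]
  · exact mostow_last hJ hA

lemma mostowToCSGen_rels : ∀ r ∈ mostowRels, FreeGroup.lift mostowToCSGen r = 1 := by
  obtain ⟨hv, hb, hvb, h3, h2⟩ := cs_relations
  intro r hr
  simp only [mostowRels, Set.mem_insert_iff, Set.mem_singleton_iff] at hr
  rcases hr with rfl | rfl | rfl | rfl | rfl <;>
    simp only [map_mul, map_pow, map_inv, FreeGroup.lift_apply_of, mostowToCSGen]
  · exact h3
  · exact hb
  · exact hv
  · exact mul_inv_eq_one.mpr (cs_v_eq h2).symm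
  · exact mul_inv_eq_one.mpr hvb

/-- The homomorphism `G → Γ` of the theorem. -/
def csToMostow : CS →* Mostow := PresentedGroup.toGroup csToMostowGen_rels

/-- The homomorphism `Γ → G` inverse to `csToMostow`. -/
def mostowToCS : Mostow →* CS := PresentedGroup.toGroup mostowToCSGen_rels

lemma csToMostow_gu : csToMostow gu = mJ * mR1 * mJ⁻¹ :=
  PresentedGroup.toGroup.of csToMostowGen_rels

lemma csToMostow_gv : csToMostow gv = mA1 := PresentedGroup.toGroup.of csToMostowGen_rels

lemma csToMostow_gb : csToMostow gb = mR1 := PresentedGroup.toGroup.of csToMostowGen_rels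

lemma mostowToCS_mJ : mostowToCS mJ = gb * gu * gv :=
  PresentedGroup.toGroup.of mostowToCSGen_rels

lemma mostowToCS_mR1 : mostowToCS mR1 = gb := PresentedGroup.toGroup.of mostowToCSGen_rels

lemma mostowToCS_mA1 : mostowToCS mA1 = gv := PresentedGroup.toGroup.of mostowToCSGen_rels

lemma mostowToCS_comp : mostowToCS.comp csToMostow = MonoidHom.id CS := by
  obtain ⟨-, -, -, h3, h2⟩ := cs_relations
  refine PresentedGroup.ext fun x => ?_
  cases x
  · change mostowToCS (csToMostow gu) = gu
    rw [csToMostow_gu, map_mul, map_mul, map_inv, mostowToCS_mJ, mostowToCS_mR1, cs_u_eq h3 h2]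
  · change mostowToCS (csToMostow gv) = gv
    rw [csToMostow_gv, mostowToCS_mA1]
  · change mostowToCS (csToMostow gb) = gb
    rw [csToMostow_gb, mostowToCS_mR1]

lemma csToMostow_comp : csToMostow.comp mostowToCS = MonoidHom.id Mostow := by
  obtain ⟨hJ, -, -, hA, -⟩ := mostow_relations
  refine PresentedGroup.ext fun x => ?_
  cases x
  · change csToMostow (mostowToCS mJ) = mJ
    rw [mostowToCS_mJ, map_mul, map_mul, csToMostow_gb, csToMostow_gu, csToMostow_gv,
      mostow_J_eq hJ hA]
  · change csToMostow (mostowToCS mR1) = mR1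
    rw [mostowToCS_mR1, csToMostow_gb]
  · change csToMostow (mostowToCS mA1) = mA1
    rw [mostowToCS_mA1, csToMostow_gv]

/-- there is an isomorphism `ψ : G → Γ` with
`ψ(u) = JR₁J⁻¹`, `ψ(v) = A₁`, `ψ(b) = R₁`. -/
theorem stmt_1 : ∃ ψ : CS ≃* Mostow,
    ψ gu = mJ * mR1 * mJ⁻¹ ∧ ψ gv = mA1 ∧ ψ gb = mR1 :=
  ⟨csToMostow.toMulEquiv mostowToCS mostowToCS_comp csToMostow_comp,
    csToMostow_gu, csToMostow_gv, csToMostow_gb⟩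
end

section
/- The group defined by the presentation with generators u, v and relations u³ = v⁴ = 1, (uv)² = (vu)² is finite of order 288. -/
/-!
The relation `uvuv = vuvu` says that `z = (uv)²` commutes with `u` and `v`. Write
`s = u v² u²`. From `v u = u⁻¹ v⁻¹ z` and `u v = v⁻¹ u⁻¹ z` one gets `v s = s v⁻¹ z³`; comparing
fourth powers of `s⁻¹ v s = v⁻¹ z³` gives `z¹² = 1`.

The left cosets of the abelian subgroup `⟨v, z⟩` are represented by
`1, u, u², v u², v² u², u v² u²`, and left multiplication by `u` or `v` maps a normal form
`t_k v^j z^i` to another one by an explicit rule (`mul_normalForm_u`, `mul_normalForm_v`). The same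
rule defines permutations `permU`, `permV` of `Fin 6 × ZMod 4 × ZMod 12` that satisfy the
defining relations, so the presented group acts on this set of `288` elements.
The map `g ↦ g • (0, 0, 0)` is then inverse to the normal form map, hence a bijection.
-/

/-- Generators of the presentation. -/
inductive K2gen : Type
  | u : K2gen
  | v : K2gen

open FreeGroup in
/-- Relators `u³ = 1`, `v⁴ = 1`, `(uv)²((vu)²)⁻¹ = 1`. -/
def k288Rels : Set (FreeGroup K2gen) :=
  { (of K2gen.u) ^ 3,
    (of K2gen.v) ^ 4,
    (of K2gen.u * of K2gen.v) ^ 2 * ((of K2gen.v * of K2gen.u) ^ 2)⁻¹ }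

/-- The group presented by `⟨u, v | u³ = v⁴ = 1, (uv)² = (vu)²⟩`. -/
abbrev K288 : Type := PresentedGroup k288Rels

namespace K288Proof

/-- Indices of normal forms: `(k, j, i)` stands for `t_k v^j z^i`. -/
abbrev Idx : Type := Fin 6 × ZMod 4 × ZMod 12

/-- Left multiplication by `u` on normal forms. -/
def stepU : Idx → Idx
  | (0, j, i) => (1, j, i)
  | (1, j, i) => (2, j, i)
  | (2, j, i) => (0, j, i)
  | (3, j, i) => (4, 3 + j, 2 + i)
  | (4, j, i) => (5, j, i)
  | (5, j, i) => (3, 1 + j, 10 + i)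

/-- Left multiplication by `v` on normal forms. -/
def stepV : Idx → Idx
  | (0, j, i) => (0, 1 + j, i)
  | (1, j, i) => (2, 3 + j, 1 + i)
  | (2, j, i) => (3, j, i)
  | (3, j, i) => (4, j, i)
  | (4, j, i) => (1, 1 + j, 11 + i)
  | (5, j, i) => (5, 3 + j, 3 + i)

theorem stepU_cube : ∀ x, stepU (stepU (stepU x)) = x := by decide +kernel

theorem stepV_fourth : ∀ x, stepV (stepV (stepV (stepV x))) = x := by decide +kernel

theorem step_braid : ∀ x,
    stepU (stepV (stepU (stepV x))) = stepV (stepU (stepV (stepU x))) := by decide +kernel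

/-- `stepU` as a permutation. -/
def permU : Equiv.Perm Idx where
  toFun := stepU
  invFun x := stepU (stepU x)
  left_inv := stepU_cube
  right_inv := stepU_cube

/-- `stepV` as a permutation. -/
def permV : Equiv.Perm Idx where
  toFun := stepV
  invFun x := stepV (stepV (stepV x))
  left_inv := stepV_fourth
  right_inv := stepV_fourth

section Group

variable {G : Type*} [Group G]

/-- Representatives `t_k` of the left cosets of `⟨v, (uv)²⟩`. -/
def rep (u v : G) : Fin 6 → G
  | 0 => 1
  | 1 => u
  | 2 => u ^ 2
  | 3 => v * u ^ 2
  | 4 => v ^ 2 * u ^ 2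
  | 5 => u * v ^ 2 * u ^ 2

/-- The element `t_k v^j z^i` with `z = (uv)²`. -/
def normalForm (u v : G) (x : Idx) : G :=
  rep u v x.1 * (v ^ x.2.1.val * ((u * v) ^ 2) ^ x.2.2.val)

theorem pow_val_add {n : ℕ} [NeZero n] {g : G} (hg : g ^ n = 1) (a b : ZMod n) :
    g ^ (a + b).val = g ^ a.val * g ^ b.val := by
  rw [ZMod.val_add, ← pow_add, pow_eq_pow_mod (a.val + b.val) hg]

theorem map_normalForm {H : Type*} [Group H] (f : G →* H) (u v : G) (x : Idx) :
    f (normalForm u v x) = normalForm (f u) (f v) x := by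
  obtain ⟨k, j, i⟩ := x
  fin_cases k <;> simp [normalForm, rep]

variable {u v z : G}

theorem collect (hz : z * v = v * z) (a b c d : ℕ) :
    (v ^ a * z ^ b) * (v ^ c * z ^ d) = (v ^ a * v ^ c) * (z ^ b * z ^ d) := by
  have h : Commute (z ^ b) (v ^ c) := (show Commute z v from hz).pow_pow b c
  rw [mul_assoc, ← mul_assoc (z ^ b), h.eq]
  simp only [mul_assoc]

/-- The rewriting rules for normal forms, as identities in the group. -/
theorem relations (hu : u ^ 3 = 1) (hv : v ^ 4 = 1) (h : (u * v) ^ 2 = (v * u) ^ 2)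
    (hzdef : z = (u * v) ^ 2) :
    z * v = v * z ∧ z ^ 12 = 1 ∧
    v * u = u ^ 2 * (v ^ 3 * z ^ 1) ∧
    v * (v ^ 2 * u ^ 2) = u * (v ^ 1 * z ^ 11) ∧
    v * (u * v ^ 2 * u ^ 2) = u * v ^ 2 * u ^ 2 * (v ^ 3 * z ^ 3) ∧
    u * (v * u ^ 2) = v ^ 2 * u ^ 2 * (v ^ 3 * z ^ 2) ∧
    u * (u * v ^ 2 * u ^ 2) = v * u ^ 2 * (v ^ 1 * z ^ 10) := by
  have hu2 : u ^ 2 = u⁻¹ := eq_inv_of_mul_eq_one_left (by rw [← pow_succ, hu])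
  have hv3 : v ^ 3 = v⁻¹ := eq_inv_of_mul_eq_one_left (by rw [← pow_succ, hv])
  have huu : u⁻¹ * u⁻¹ = u := by rw [← mul_inv_rev, ← sq, hu2, inv_inv]
  have hzuv : z = u * v * u * v := by rw [hzdef, sq]; group
  have hzvu : z = v * u * v * u := by rw [hzdef, h, sq]; group
  have hzu : Commute z u := by
    change z * u = u * z
    conv_lhs => rw [hzuv]
    rw [hzvu]; group
  have hzv : Commute z v := by
    change z * v = v * z
    conv_lhs => rw [hzvu]
    rw [hzuv]; group
  have hzu' : z * u⁻¹ = u⁻¹ * z := hzu.inv_right.eq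
  have hA : v * u = u⁻¹ * v⁻¹ * z := by rw [hzvu]; group
  have hB : u * v = v⁻¹ * u⁻¹ * z := by rw [hzuv]; group
  have hD : u * v * u⁻¹ = v⁻¹ * u * z := by
    calc u * v * u⁻¹ = v⁻¹ * u⁻¹ * (z * u⁻¹) := by rw [hB]; group
      _ = v⁻¹ * (u⁻¹ * u⁻¹) * z := by rw [hzu']; group
      _ = v⁻¹ * u * z := by rw [huu]
  have hE : v * (u * v ^ 2 * u⁻¹) = u * v ^ 2 * u⁻¹ * (v⁻¹ * z ^ 3) := by
    have h1 : v * (u * v ^ 2 * u⁻¹) = u * v⁻¹ * u * z ^ 2 := by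
      calc v * (u * v ^ 2 * u⁻¹) = v * u * (v ^ 2 * u⁻¹) := by group
        _ = u⁻¹ * v⁻¹ * (z * (v ^ 2 * u⁻¹)) := by rw [hA, mul_assoc]
        _ = u⁻¹ * v⁻¹ * ((v ^ 2 * u⁻¹) * z) := by
          rw [((hzv.pow_right 2).mul_right hzu.inv_right).eq]
        _ = u⁻¹ * u⁻¹ * (u * v * u⁻¹) * z := by group
        _ = u * (v⁻¹ * u * z) * z := by rw [huu, hD]
        _ = u * v⁻¹ * u * z ^ 2 := by simp only [sq, mul_assoc]
    have h2 : u * v ^ 2 * u⁻¹ * (v⁻¹ * z ^ 3) = u * v⁻¹ * u * z ^ 2 := by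
      calc u * v ^ 2 * u⁻¹ * (v⁻¹ * z ^ 3) = u * v ^ 2 * (u⁻¹ * v⁻¹ * z) * z ^ 2 := by group
        _ = u * v ^ 3 * u * z ^ 2 := by rw [← hA]; group
        _ = u * v⁻¹ * u * z ^ 2 := by rw [hv3]
    rw [h1, h2]
  -- `v` is conjugate to `v⁻¹ z³`, and fourth powers of both are compared
  have hz12 : z ^ 12 = 1 := by
    have hc : u * v ^ 2 * u⁻¹ * (v⁻¹ * z ^ 3) * (u * v ^ 2 * u⁻¹)⁻¹ = v := by
      rw [← hE, mul_inv_cancel_right]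
    have h4 := congrArg (· ^ 4) hc
    simp only [conj_pow, hv, conj_eq_one_iff] at h4
    rw [(hzv.inv_right.symm.pow_right 3).mul_pow, inv_pow, hv, inv_one, one_mul, ← pow_mul] at h4
    exact h4
  have hz11 : z ^ 11 = z⁻¹ := eq_inv_of_mul_eq_one_left (by rw [← pow_succ, hz12])
  have hz10 : z ^ 10 = (z ^ 2)⁻¹ := eq_inv_of_mul_eq_one_left (by rw [← pow_add, hz12])
  have hF : u * (v * u⁻¹) = v ^ 2 * u⁻¹ * (v⁻¹ * z ^ 2) := by
    calc u * (v * u⁻¹) = v⁻¹ * u * z := by rw [← mul_assoc, hD]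
      _ = v ^ 3 * u * z := by rw [hv3]
      _ = v ^ 2 * (v * u) * z := by group
      _ = v ^ 2 * u⁻¹ * (v⁻¹ * z ^ 2) := by rw [hA]; simp only [sq, mul_assoc]
  refine ⟨hzv.eq, hz12, ?_, ?_, ?_, ?_, ?_⟩
  · rw [hu2, hv3, hA]; group
  · rw [hu2, hz11, pow_one, ← mul_assoc, ← mul_assoc, hB, ← pow_succ', hv3]; group
  · rw [hu2, hv3, hE]
  · rw [hu2, hv3, hF]
  · have h1 : v ^ 2 * u⁻¹ = u * (v * u⁻¹) * (v⁻¹ * z ^ 2)⁻¹ := by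
      rw [hF, mul_inv_cancel_right]
    have h2 : (v⁻¹ * z ^ 2)⁻¹ = v * (z ^ 2)⁻¹ := by
      rw [mul_inv_rev, inv_inv, ((hzv.pow_left 2).inv_left).eq]
    calc u * (u * v ^ 2 * u ^ 2) = u ^ 2 * (v ^ 2 * u⁻¹) := by
          rw [← hu2]; simp only [sq, mul_assoc]
      _ = v * u ^ 2 * (v ^ 1 * z ^ 10) := by rw [h1, h2, hu2, hz10]; group

theorem mul_normalForm_u (hu : u ^ 3 = 1) (hv : v ^ 4 = 1) (h : (u * v) ^ 2 = (v * u) ^ 2)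
    (x : Idx) : u * normalForm u v x = normalForm u v (stepU x) := by
  obtain ⟨hzv, hz, -, -, -, h3, h5⟩ := relations hu hv h rfl
  obtain ⟨k, j, i⟩ := x
  have e1 : ZMod.val (1 : ZMod 4) = 1 := rfl
  have e2 : ZMod.val (3 : ZMod 4) = 3 := rfl
  have e3 : ZMod.val (2 : ZMod 12) = 2 := rfl
  have e4 : ZMod.val (10 : ZMod 12) = 10 := rfl
  match k with
  | 0 => simp [normalForm, rep, stepU]
  | 1 => simp [normalForm, rep, stepU, sq, mul_assoc]
  | 2 => simp only [normalForm, rep, stepU]; rw [← mul_assoc, ← pow_succ', hu]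
  | 3 =>
    simp only [normalForm, rep, stepU]
    rw [pow_val_add hv, pow_val_add hz, e2, e3, ← collect hzv, ← mul_assoc, h3]
    simp only [mul_assoc]
  | 4 => simp [normalForm, rep, stepU, mul_assoc]
  | 5 =>
    simp only [normalForm, rep, stepU]
    rw [pow_val_add hv, pow_val_add hz, e1, e4, ← collect hzv, ← mul_assoc, h5]
    simp only [mul_assoc]

theorem mul_normalForm_v (hu : u ^ 3 = 1) (hv : v ^ 4 = 1) (h : (u * v) ^ 2 = (v * u) ^ 2)
    (x : Idx) : v * normalForm u v x = normalForm u v (stepV x) := by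
  obtain ⟨hzv, hz, h1, h4, h5, -, -⟩ := relations hu hv h rfl
  obtain ⟨k, j, i⟩ := x
  have e1 : ZMod.val (1 : ZMod 4) = 1 := rfl
  have e2 : ZMod.val (3 : ZMod 4) = 3 := rfl
  have e3 : ZMod.val (1 : ZMod 12) = 1 := rfl
  have e4 : ZMod.val (11 : ZMod 12) = 11 := rfl
  have e5 : ZMod.val (3 : ZMod 12) = 3 := rfl
  match k with
  | 0 =>
    simp only [normalForm, rep, stepV]
    rw [pow_val_add hv, e1]
    simp only [mul_assoc, one_mul, pow_one]
  | 1 =>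
    simp only [normalForm, rep, stepV]
    rw [pow_val_add hv, pow_val_add hz, e2, e3, ← collect hzv, ← mul_assoc, h1]
    simp only [mul_assoc]
  | 2 => simp [normalForm, rep, stepV, mul_assoc]
  | 3 => simp [normalForm, rep, stepV, sq v, mul_assoc]
  | 4 =>
    simp only [normalForm, rep, stepV]
    rw [pow_val_add hv, pow_val_add hz, e1, e4, ← collect hzv, ← mul_assoc, h4]
    simp only [mul_assoc]
  | 5 =>
    simp only [normalForm, rep, stepV]
    rw [pow_val_add hv, pow_val_add hz, e2, e5, ← collect hzv, ← mul_assoc, h5]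
    simp only [mul_assoc]

end Group

/-- The normal form indexed by `x`, acting on the base point, gives `x`. -/
theorem normalForm_perm_base : ∀ x : Idx, normalForm permU permV x (0, 0, 0) = x := by
  decide +kernel

/-- The images of the generators in the permutation model. -/
def genPerm : K2gen → Equiv.Perm Idx
  | .u => permU
  | .v => permV

theorem genPerm_rels : ∀ r ∈ k288Rels, FreeGroup.lift genPerm r = 1 := by
  rintro r (rfl | rfl | rfl)
  · ext1 x
    simp [genPerm, pow_succ]
    exact stepU_cube x
  · ext1 x
    simp [genPerm, pow_succ]
    exact stepV_fourth x
  · simp only [map_mul, map_inv, map_pow, FreeGroup.lift_apply_of, genPerm]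
    rw [mul_inv_eq_one]
    ext1 x
    simp [pow_succ]
    exact step_braid x

/-- The action of the presented group on `Idx`. -/
def toPerm : K288 →* Equiv.Perm Idx := PresentedGroup.toGroup genPerm_rels

/-- The generator `u` of the presented group. -/
def gu : K288 := PresentedGroup.of K2gen.u

/-- The generator `v` of the presented group. -/
def gv : K288 := PresentedGroup.of K2gen.v

theorem toPerm_gu : toPerm gu = permU := PresentedGroup.toGroup.of genPerm_rels

theorem toPerm_gv : toPerm gv = permV := PresentedGroup.toGroup.of genPerm_rels

theorem gu_cube : gu ^ 3 = 1 :=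
  PresentedGroup.one_of_mem (rels := k288Rels) (Or.inl rfl)

theorem gv_fourth : gv ^ 4 = 1 :=
  PresentedGroup.one_of_mem (rels := k288Rels) (Or.inr (Or.inl rfl))

theorem braid : (gu * gv) ^ 2 = (gv * gu) ^ 2 :=
  mul_inv_eq_one.mp (PresentedGroup.one_of_mem (rels := k288Rels) (Or.inr (Or.inr rfl)))

/-- The normal form map intertwines the action on indices with left multiplication. -/
theorem normalForm_toPerm (g : K288) :
    ∀ x, normalForm gu gv (toPerm g x) = g * normalForm gu gv x := by
  have hg : g ∈ Subgroup.closure (Set.range (PresentedGroup.of (rels := k288Rels))) := by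
    rw [PresentedGroup.closure_range_of]; trivial
  induction hg using Subgroup.closure_induction with
  | mem y hy =>
    obtain ⟨a, rfl⟩ := hy
    intro x
    cases a with
    | u =>
      change normalForm gu gv (toPerm gu x) = gu * _
      rw [toPerm_gu, mul_normalForm_u gu_cube gv_fourth braid]; rfl
    | v =>
      change normalForm gu gv (toPerm gv x) = gv * _
      rw [toPerm_gv, mul_normalForm_v gu_cube gv_fourth braid]; rfl
  | one => simp
  | mul a b _ _ ha hb =>
    intro x
    rw [map_mul, Equiv.Perm.mul_apply, ha, hb, mul_assoc]
  | inv a _ ha =>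
    intro x
    rw [eq_inv_mul_iff_mul_eq, ← ha, ← Equiv.Perm.mul_apply, ← map_mul, mul_inv_cancel, map_one,
      Equiv.Perm.one_apply]

/-- The presented group is in bijection with the set of indices through its orbit map. -/
def equivIdx : K288 ≃ Idx where
  toFun g := toPerm g (0, 0, 0)
  invFun := normalForm gu gv
  left_inv g := by
    rw [normalForm_toPerm]
    simp [normalForm, rep]
  right_inv x := by
    change toPerm (normalForm gu gv x) (0, 0, 0) = x
    rw [map_normalForm, toPerm_gu, toPerm_gv, normalForm_perm_base]

end K288Proof

/-- this presented group is finite of order 288. -/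
theorem stmt_2 : Finite K288 ∧ Nat.card K288 = 288 := by
  refine ⟨Finite.of_equiv _ K288Proof.equivIdx.symm, ?_⟩
  rw [Nat.card_congr K288Proof.equivIdx]
  simp [K288Proof.Idx]
end

section
/- The 864 elements bᵐk, where m ∈ {−1, 0, 1} and k ranges over K, form a complete set of representatives for the cosets of Π in G; that is, every element of G lies in the coset Πbᵐk for exactly one pair (m, k) with m ∈ {−1, 0, 1} and k ∈ K. -/
/-- `a₁ = vuv⁻¹j⁴buvj²`. -/
def a1 : CS := gv * gu * gv⁻¹ * gj ^ 4 * gb * gu * gv * gj ^ 2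
/-- `a₂ = v²ubuv⁻¹uv²j`. -/
def a2 : CS := gv ^ 2 * gu * gb * gu * gv⁻¹ * gu * gv ^ 2 * gj
/-- `a₃ = u⁻¹v²uj⁹bv⁻¹uv⁻¹j⁸`. -/
def a3 : CS := gu⁻¹ * gv ^ 2 * gu * gj ^ 9 * gb * gv⁻¹ * gu * gv⁻¹ * gj ^ 8

/-- The subgroup `Π` generated by `a₁`, `a₂`, `a₃`. -/
def PiGrp : Subgroup CS := Subgroup.closure {a1, a2, a3}

lemma a1_mem : a1 ∈ PiGrp := Subgroup.subset_closure (Set.mem_insert _ _)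
lemma a2_mem : a2 ∈ PiGrp :=
  Subgroup.subset_closure (Set.mem_insert_of_mem _ (Set.mem_insert _ _))
lemma a3_mem : a3 ∈ PiGrp :=
  Subgroup.subset_closure (Set.mem_insert_of_mem _ (Set.mem_insert_of_mem _ (Set.mem_singleton _)))

/-- The subgroup `K` generated by `u` and `v` (finite of order 288). -/
def Kgp : Subgroup CS := Subgroup.closure {gu, gv}

/-! ### The relations of the presentation -/

lemma gu_pow : gu ^ 3 = 1 :=
  PresentedGroup.one_of_mem (rels := csRels) (x := (FreeGroup.of CSgen.u) ^ 3) (by simp [csRels])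

lemma gv_pow : gv ^ 4 = 1 :=
  PresentedGroup.one_of_mem (rels := csRels) (x := (FreeGroup.of CSgen.v) ^ 4) (by simp [csRels])

lemma gb_pow : gb ^ 3 = 1 :=
  PresentedGroup.one_of_mem (rels := csRels) (x := (FreeGroup.of CSgen.b) ^ 3) (by simp [csRels])

lemma rel_uv : (gu * gv) ^ 2 = (gv * gu) ^ 2 :=
  mul_inv_eq_one.mp (PresentedGroup.one_of_mem (rels := csRels)
    (x := (FreeGroup.of CSgen.u * FreeGroup.of CSgen.v) ^ 2 *
      ((FreeGroup.of CSgen.v * FreeGroup.of CSgen.u) ^ 2)⁻¹) (by simp [csRels]))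

lemma rel_vb : gv * gb = gb * gv :=
  mul_inv_eq_one.mp (PresentedGroup.one_of_mem (rels := csRels)
    (x := FreeGroup.of CSgen.v * FreeGroup.of CSgen.b *
      (FreeGroup.of CSgen.b * FreeGroup.of CSgen.v)⁻¹) (by simp [csRels]))

lemma rel_buv : (gb * gu * gv) ^ 3 = 1 :=
  PresentedGroup.one_of_mem (rels := csRels)
    (x := (FreeGroup.of CSgen.b * FreeGroup.of CSgen.u * FreeGroup.of CSgen.v) ^ 3)
    (by simp [csRels])

lemma rel_buvu : (gb * gu * gv * gu) ^ 2 * gv = 1 :=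
  PresentedGroup.one_of_mem (rels := csRels)
    (x := (FreeGroup.of CSgen.b * FreeGroup.of CSgen.u * FreeGroup.of CSgen.v *
      FreeGroup.of CSgen.u) ^ 2 * FreeGroup.of CSgen.v) (by simp [csRels])

/-! ### Normal forms in `K` -/

lemma gj_comm_u : Commute gj gu := by
  have h : gj = (gv * gu) ^ 2 := rel_uv
  calc gj * gu = (gu * gv) ^ 2 * gu := rfl
    _ = gu * (gv * gu) ^ 2 := by simp only [pow_two, mul_assoc]
    _ = gu * gj := by rw [h]

lemma gj_comm_v : Commute gj gv := by
  have h : gj = (gv * gu) ^ 2 := rel_uv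
  calc gj * gv = (gv * gu) ^ 2 * gv := by rw [h]
    _ = gv * (gu * gv) ^ 2 := by simp only [pow_two, mul_assoc]
    _ = gv * gj := rfl

lemma gu_mul_gj : gu * gj = gj * gu := gj_comm_u.eq.symm

lemma gv_mul_gj : gv * gj = gj * gv := gj_comm_v.eq.symm

lemma gu_mul_gj_assoc (x : CS) : gu * (gj * x) = gj * (gu * x) := by
  rw [← mul_assoc, gu_mul_gj, mul_assoc]

lemma gv_mul_gj_assoc (x : CS) : gv * (gj * x) = gj * (gv * x) := by
  rw [← mul_assoc, gv_mul_gj, mul_assoc]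

lemma gu_cube (x : CS) : gu * (gu * (gu * x)) = x := by
  have h : gu * (gu * gu) = 1 := by simpa [pow_succ, mul_assoc] using gu_pow
  calc gu * (gu * (gu * x)) = gu * (gu * gu) * x := by simp only [mul_assoc]
    _ = x := by rw [h, one_mul]

lemma gv_fourth (x : CS) : gv * (gv * (gv * (gv * x))) = x := by
  have h : gv * (gv * (gv * gv)) = 1 := by simpa [pow_succ, mul_assoc] using gv_pow
  calc gv * (gv * (gv * (gv * x))) = gv * (gv * (gv * gv)) * x := by simp only [mul_assoc]
    _ = x := by rw [h, one_mul]

lemma gu_cube' : gu * (gu * gu) = 1 := by simpa using gu_cube 1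

lemma gv_fourth' : gv * (gv * (gv * gv)) = 1 := by simpa using gv_fourth 1

/-- The defining relation `uvuv = j`, solved for `vu`. -/
lemma vu_rule (x : CS) : gv * (gu * x) = gj * (gu * (gu * (gv * (gv * (gv * x))))) := by
  have h : gu * (gv * (gu * gv)) = gj := by simp only [gj, pow_two, mul_assoc]
  calc gv * (gu * x) = gu * (gu * (gu * (gv * (gu * (gv * (gv * (gv * (gv * x)))))))) := by
        rw [gu_cube, gv_fourth]
    _ = gu * (gu * ((gu * (gv * (gu * gv))) * (gv * (gv * (gv * x))))) := by
        simp only [mul_assoc]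
    _ = _ := by rw [h, gu_mul_gj_assoc, gu_mul_gj_assoc]

/-- The relation `uvuv = j`, solved for `uvu`. -/
lemma uvu_rule (x : CS) : gu * (gv * (gu * x)) = gj * (gv * (gv * (gv * x))) := by
  rw [vu_rule x, gu_mul_gj_assoc, gu_cube]

lemma vuuvu_rule (x : CS) :
    gv * (gu * (gu * (gv * (gu * x)))) = gj * (gj * (gu * (gu * (gv * (gv * x))))) := by
  rw [vu_rule x]
  simp only [gu_mul_gj_assoc, gv_mul_gj_assoc]
  rw [gu_cube, vu_rule, gv_fourth]

lemma vuuvvu_rule (x : CS) : gv * (gu * (gu * (gv * (gv * (gu * x))))) =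
    gj * (gj * (gj * (gj * (gu * (gu * (gv * (gu * (gu * (gv * (gv * x)))))))))) := by
  rw [vu_rule x]
  simp only [gu_mul_gj_assoc, gv_mul_gj_assoc]
  rw [vuuvu_rule, vu_rule]
  simp only [gu_mul_gj_assoc, gv_mul_gj_assoc]
  rw [gv_fourth]

/-- Multiplying `vu²v²` three times by `u` on the right multiplies it by `j¹²`, while `u³ = 1`. -/
lemma gj_pow : gj ^ 12 = 1 := by
  have h := vuuvvu_rule (gu * (gu * 1))
  rw [gu_cube, vuuvvu_rule, vuuvvu_rule] at h
  simp only [gu_mul_gj_assoc] at h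
  rw [gu_cube, gu_cube] at h
  have h2 : gj ^ 12 * (gv * (gu * (gu * (gv * (gv * 1))))) =
      gv * (gu * (gu * (gv * (gv * 1)))) := by
    simpa only [pow_succ, pow_zero, one_mul, mul_assoc] using h.symm
  exact mul_eq_right.mp h2

lemma vvvu_rule (x : CS) :
    gv * (gv * (gv * (gu * x))) = gj ^ 11 * (gu * (gv * (gu * (gu * x)))) := by
  rw [uvu_rule, ← mul_assoc (gj ^ 11), ← pow_succ, gj_pow, one_mul]

lemma vuuvvvu_rule (x : CS) : gv * (gu * (gu * (gv * (gv * (gv * (gu * x)))))) =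
    gj ^ 9 * (gu * (gv * (gu * (gu * (gv * x))))) := by
  -- Both sides are equal to `j¹¹ v² u² x`.
  have h1 : gu * (gv * (gu * (gu * (gv * x)))) = gj * (gj * (gv * (gv * (gu * (gu * x))))) := by
    rw [uvu_rule, vu_rule (gv * x), gv_fourth]
    simp only [gv_mul_gj_assoc]
  have h2 : ∀ y, gu * (gj ^ 11 * y) = gj ^ 11 * (gu * y) := fun y => by
    rw [← mul_assoc, (gj_comm_u.pow_left 11).eq.symm, mul_assoc]
  have h3 : ∀ y, gv * (gj ^ 11 * y) = gj ^ 11 * (gv * y) := fun y => by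
    rw [← mul_assoc, (gj_comm_v.pow_left 11).eq.symm, mul_assoc]
  rw [vvvu_rule, h1, h2, h2, gu_cube, h3]
  simp only [pow_succ, pow_zero, one_mul, mul_assoc]

/-! ### The coset table -/

/-- The code of `bᵐ uᵃ (vu²)ˢ jⁿ vᵉ`. -/
def code (m s a n e : ℕ) : ℕ := 288 * m + 144 * s + 48 * a + 4 * n + e

/-- The element `bᵐ uᵃ (vu²)ˢ jⁿ vᵉ` with code `x`. -/
def rep (x : ℕ) : CS :=
  gb ^ (x / 288) * (gu ^ (x / 48 % 3) * (gv * gu ^ 2) ^ (x / 144 % 2) * gj ^ (x / 4 % 12) *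
    gv ^ (x % 4))

/-- The entry `(s', a', n', e')` at position `4s + e` means
`(vu²)ˢ vᵉ u = u^a' (vu²)^s' j^n' v^e'`. -/
def tableU : List (ℕ × ℕ × ℕ × ℕ) :=
  [(0, 1, 0, 0), (0, 2, 1, 3), (1, 0, 1, 3), (1, 1, 11, 0),
   (0, 0, 0, 1), (0, 2, 2, 2), (1, 2, 4, 2), (1, 1, 9, 1)]

/-- The row `6m + 3s + a` lists, for `n = 0, …, 11`, the code of the coset
`Π bᵐ uᵃ (vu²)ˢ jⁿ b`. -/
def tableB : List (List ℕ) :=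
  [[288, 621, 123, 863, 304, 589, 139, 831, 320, 605, 107, 847],
   [297, 839, 130, 615, 313, 855, 98, 583, 329, 823, 114, 599],
   [584, 71, 851, 38, 600, 87, 819, 6, 616, 55, 835, 22],
   [575, 263, 722, 814, 543, 279, 738, 782, 559, 247, 754, 798],
   [376, 487, 450, 417, 344, 503, 466, 385, 360, 519, 434, 401],
   [707, 758, 178, 554, 675, 726, 146, 570, 691, 742, 162, 538],
   [576, 45, 841, 92, 592, 13, 857, 60, 608, 29, 825, 76],
   [399, 629, 506, 205, 415, 645, 522, 221, 431, 661, 490, 237],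
   [366, 216, 463, 633, 382, 232, 479, 649, 350, 200, 447, 665],
   [406, 231, 515, 669, 422, 199, 483, 637, 390, 215, 499, 653],
   [641, 454, 194, 375, 657, 470, 210, 343, 625, 438, 226, 359],
   [190, 793, 708, 283, 158, 809, 676, 251, 174, 777, 692, 267],
   [0, 333, 74, 141, 16, 301, 90, 109, 32, 317, 58, 125],
   [440, 508, 336, 392, 456, 524, 352, 408, 472, 492, 368, 424],
   [730, 254, 549, 807, 746, 270, 565, 775, 762, 286, 533, 791],
   [771, 151, 259, 719, 787, 167, 275, 687, 803, 183, 243, 703],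
   [155, 766, 698, 560, 171, 734, 714, 528, 187, 750, 682, 544],
   [10, 118, 82, 324, 26, 134, 50, 292, 42, 102, 66, 308]]

/-- The rank of the `b`-edge at each entry of `tableB`: the round of the enumeration in which the
edge is deduced from edges of smaller rank. -/
def tableRank : List (List ℕ) :=
  [[0, 1, 15, 15, 13, 7, 16, 16, 16, 13, 1, 14],
   [14, 16, 16, 17, 15, 11, 16, 5, 5, 15, 1, 11],
   [16, 16, 14, 2, 11, 0, 16, 15, 16, 16, 3, 16],
   [16, 0, 1, 14, 5, 1, 7, 16, 16, 17, 16, 16],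
   [14, 15, 13, 16, 17, 17, 16, 15, 13, 3, 3, 11],
   [16, 17, 17, 5, 16, 3, 1, 16, 5, 9, 0, 7],
   [0, 1, 14, 14, 12, 12, 15, 14, 17, 17, 14, 4],
   [15, 14, 15, 16, 15, 7, 14, 14, 16, 14, 15, 13],
   [16, 15, 16, 14, 14, 12, 14, 15, 15, 15, 15, 15],
   [13, 2, 5, 13, 16, 14, 15, 16, 17, 15, 17, 15],
   [13, 14, 14, 16, 17, 17, 17, 15, 15, 4, 4, 13],
   [16, 16, 16, 6, 4, 12, 14, 6, 16, 15, 15, 15],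
   [0, 1, 4, 15, 6, 13, 10, 12, 14, 17, 16, 16],
   [14, 16, 15, 15, 16, 12, 7, 15, 16, 17, 13, 14],
   [16, 15, 13, 4, 11, 6, 14, 10, 16, 17, 17, 14],
   [15, 2, 4, 15, 15, 8, 10, 12, 14, 16, 17, 17],
   [14, 16, 9, 14, 16, 14, 15, 17, 16, 13, 3, 13],
   [16, 15, 15, 15, 16, 4, 15, 13, 15, 15, 12, 16]]

/-- Right multiplication by `u` on codes. -/
def stepU (x : ℕ) : ℕ :=
  let t := tableU.getD (4 * (x / 144 % 2) + x % 4) (0, 0, 0, 0)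
  code (x / 288) t.1 ((x / 48 % 3 + t.2.1) % 3) ((x / 4 % 12 + t.2.2.1) % 12) t.2.2.2

/-- Right multiplication by `v` on codes. -/
def stepV (x : ℕ) : ℕ := 4 * (x / 4) + (x + 1) % 4

/-- Right multiplication by `b` on codes. As `b` commutes with `v`, the exponent of `v` is carried
along. -/
def stepB (x : ℕ) : ℕ :=
  let t := (tableB.getD (x / 48) []).getD (x / 4 % 12) 0
  4 * (t / 4) + (t + x) % 4

/-- The rank of the `b`-edge starting at `x`. -/
def rank (x : ℕ) : ℕ := (tableRank.getD (x / 48) []).getD (x / 4 % 12) 0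

/-- Right multiplication by a generator on codes. -/
def step : CSgen → ℕ → ℕ
  | .u => stepU
  | .v => stepV
  | .b => stepB

/-- The element of `G` represented by a positive word. -/
def ev (w : List CSgen) : CS := (w.map PresentedGroup.of).prod

/-- The right action of positive words on codes. -/
def act (w : List CSgen) (x : ℕ) : ℕ := w.foldl (fun y s => step s y) x

lemma ev_cons (s : CSgen) (w : List CSgen) : ev (s :: w) = PresentedGroup.of s * ev w := rfl

lemma ev_append (w₁ w₂ : List CSgen) : ev (w₁ ++ w₂) = ev w₁ * ev w₂ := by
  simp [ev]

set_option maxRecDepth 10000 in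
lemma step_table : ∀ x < 864, (stepU x < 864 ∧ stepV x < 864 ∧ stepB x < 864) ∧
    stepU x / 288 = x / 288 ∧ stepV x / 288 = x / 288 := by
  decide +kernel

lemma step_lt (s : CSgen) {x : ℕ} (hx : x < 864) : step s x < 864 := by
  obtain ⟨⟨h1, h2, h3⟩, -⟩ := step_table x hx
  cases s <;> assumption

lemma act_lt (w : List CSgen) {x : ℕ} (hx : x < 864) : act w x < 864 := by
  induction w generalizing x with
  | nil => exact hx
  | cons s w ih => exact ih (step_lt s hx)

/-! ### Right multiplication by `u` and `v` -/

lemma rep_code {m s a n e : ℕ} (hs : s < 2) (ha : a < 3) (hn : n < 12) (he : e < 4) :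
    rep (code m s a n e) = gb ^ m * (gu ^ a * (gv * gu ^ 2) ^ s * gj ^ n * gv ^ e) := by
  have h1 : code m s a n e / 288 = m := by unfold code; omega
  have h2 : code m s a n e / 48 % 3 = a := by unfold code; omega
  have h3 : code m s a n e / 144 % 2 = s := by unfold code; omega
  have h4 : code m s a n e / 4 % 12 = n := by unfold code; omega
  have h5 : code m s a n e % 4 = e := by unfold code; omega
  rw [rep, h1, h2, h3, h4, h5]

lemma rep_zero : rep 0 = 1 := by simp [rep]

lemma gu_pow_mod (a : ℕ) : gu ^ (a % 3) = gu ^ a := (pow_eq_pow_mod a gu_pow).symm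

lemma gv_pow_mod (a : ℕ) : gv ^ (a % 4) = gv ^ a := (pow_eq_pow_mod a gv_pow).symm

lemma gj_pow_mod (a : ℕ) : gj ^ (a % 12) = gj ^ a := (pow_eq_pow_mod a gj_pow).symm

/-- The correctness of `tableU`. -/
lemma tableU_spec (s e : ℕ) (hs : s < 2) (he : e < 4) :
    (gv * gu ^ 2) ^ s * gv ^ e * gu =
      gj ^ (tableU.getD (4 * s + e) (0, 0, 0, 0)).2.2.1 *
      (gu ^ (tableU.getD (4 * s + e) (0, 0, 0, 0)).2.1 *
      (gv * gu ^ 2) ^ (tableU.getD (4 * s + e) (0, 0, 0, 0)).1 *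
      gv ^ (tableU.getD (4 * s + e) (0, 0, 0, 0)).2.2.2) := by
  have h1 := vu_rule 1
  have h2 := congrArg (gv * ·) (vu_rule 1)
  have h3 := vvvu_rule 1
  have h4 := gu_cube'
  have h5 := vuuvu_rule 1
  have h6 := vuuvvu_rule 1
  have h7 := vuuvvvu_rule 1
  simp only [gv_mul_gj_assoc, mul_one] at h1 h2 h3 h5 h6 h7
  interval_cases s <;> interval_cases e <;>
    simp only [tableU, List.getD_cons_zero, List.getD_cons_succ, Nat.reduceMul, Nat.reduceAdd,
      pow_zero, one_mul, mul_one, pow_one]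
  · simp only [pow_succ, pow_zero, one_mul, mul_assoc]
    exact h1
  · simp only [pow_succ, pow_zero, one_mul, mul_assoc]
    exact h2
  · simpa only [pow_two, pow_three, mul_assoc] using h3
  · rw [pow_two, mul_assoc, mul_assoc, h4, mul_one]
  · simpa only [pow_two, mul_assoc] using h5
  · simp only [pow_succ, pow_zero, one_mul, mul_assoc]
    exact h6
  · simpa only [pow_two, pow_three, mul_assoc] using h7

lemma tableU_lt (s e : ℕ) (hs : s < 2) (he : e < 4) :
    (tableU.getD (4 * s + e) (0, 0, 0, 0)).1 < 2 ∧
      (tableU.getD (4 * s + e) (0, 0, 0, 0)).2.2.2 < 4 := by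
  interval_cases s <;> interval_cases e <;> simp [tableU]

lemma rep_mul_u (x : ℕ) : rep x * gu = rep (stepU x) := by
  have hs : x / 144 % 2 < 2 := Nat.mod_lt _ (by norm_num)
  have he : x % 4 < 4 := Nat.mod_lt _ (by norm_num)
  have key := tableU_spec _ _ hs he
  obtain ⟨l1, l2⟩ := tableU_lt _ _ hs he
  rw [stepU, rep_code l1 (Nat.mod_lt _ (by norm_num)) (Nat.mod_lt _ (by norm_num)) l2, rep]
  generalize tableU.getD (4 * (x / 144 % 2) + x % 4) (0, 0, 0, 0) = t at key
  obtain ⟨s', a', n', e'⟩ := t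
  simp only at key ⊢
  rw [gu_pow_mod (_ + a'), gj_pow_mod (_ + n')]
  generalize x / 4 % 12 = n
  generalize x / 48 % 3 = a
  generalize x / 144 % 2 = s at key ⊢
  generalize x % 4 = e at key ⊢
  have cw : ∀ k l, Commute (gj ^ k) ((gv * gu ^ 2) ^ l) := fun k l =>
    ((gj_comm_v.mul_right (gj_comm_u.pow_right 2)).pow_right l).pow_left k
  have cu : ∀ k l, Commute (gj ^ k) (gu ^ l) := fun k l => (gj_comm_u.pow_pow k l)
  rw [mul_assoc]
  congr 1
  calc gu ^ a * (gv * gu ^ 2) ^ s * gj ^ n * gv ^ e * gu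
      = gu ^ a * (gj ^ n * ((gv * gu ^ 2) ^ s * gv ^ e * gu)) := by
        rw [mul_assoc (gu ^ a), ← (cw n s).eq]; simp only [mul_assoc]
    _ = gu ^ a * (gj ^ (n + n') * gu ^ a') * (gv * gu ^ 2) ^ s' * gv ^ e' := by
        rw [key, pow_add]; simp only [mul_assoc]
    _ = gu ^ (a + a') * (gj ^ (n + n') * (gv * gu ^ 2) ^ s') * gv ^ e' := by
        rw [(cu _ _).eq, pow_add gu]; simp only [mul_assoc]
    _ = _ := by rw [(cw _ _).eq]; simp only [mul_assoc]

lemma rep_mul_v (x : ℕ) : rep x * gv = rep (stepV x) := by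
  have h1 : stepV x / 288 = x / 288 := by unfold stepV; omega
  have h2 : stepV x / 48 = x / 48 := by unfold stepV; omega
  have h3 : stepV x / 144 = x / 144 := by unfold stepV; omega
  have h4 : stepV x / 4 = x / 4 := by unfold stepV; omega
  have h5 : stepV x % 4 = (x % 4 + 1) % 4 := by unfold stepV; omega
  rw [rep, rep, h1, h2, h3, h4, h5, gv_pow_mod (_ + 1), pow_succ (gv) (x % 4)]
  simp only [mul_assoc]

/-! ### Right multiplication by `b` -/

/-- The `b`-edge of the coset table at `x` is correct: `Π * rep x * b = Π * rep (stepB x)`. -/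
def ValidB (x : ℕ) : Prop := rep x * gb * (rep (stepB x))⁻¹ ∈ PiGrp

lemma ValidB.stepV {x : ℕ} (h : ValidB x) : ValidB (stepV x) := by
  have h1 : stepB (_root_.stepV x) = _root_.stepV (stepB x) := by
    have h2 : _root_.stepV x / 48 = x / 48 := by unfold _root_.stepV; omega
    have h3 : _root_.stepV x / 4 = x / 4 := by unfold _root_.stepV; omega
    have h4 : _root_.stepV x % 4 = (x + 1) % 4 := by unfold _root_.stepV; omega
    simp only [stepB, h2, h3]
    unfold _root_.stepV
    omega
  unfold ValidB at h ⊢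
  rw [h1, ← rep_mul_v, ← rep_mul_v, mul_assoc (rep x), rel_vb]
  convert h using 1
  group

lemma ValidB.congr {x y : ℕ} (h : ValidB x) (hxy : x / 4 = y / 4) : ValidB y := by
  have h1 : ∀ k, ValidB (_root_.stepV^[k] x) := fun k => by
    induction k with
    | zero => exact h
    | succ k ih => rw [Function.iterate_succ_apply']; exact ih.stepV
  have h2 : ∀ k, _root_.stepV^[k] x = 4 * (x / 4) + (x + k) % 4 := fun k => by
    induction k with
    | zero => simp only [Function.iterate_zero, id]; omega
    | succ k ih => rw [Function.iterate_succ_apply', ih]; unfold _root_.stepV; omega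
  have h3 := h1 (y + 4 - x % 4)
  rw [h2] at h3
  convert h3 using 1
  omega

/-- The path labelled `w` from `x` uses only `b`-edges of rank less than `r`. -/
def pathBelow (r : ℕ) : List CSgen → ℕ → Bool
  | [], _ => true
  | .u :: w, x => pathBelow r w (stepU x)
  | .v :: w, x => pathBelow r w (stepV x)
  | .b :: w, x => Nat.blt (rank x) r && pathBelow r w (stepB x)

lemma path_sound {r : ℕ} (hr : ∀ y < 864, rank y < r → ValidB y) (w : List CSgen) {x : ℕ}
    (hx : x < 864) (h : pathBelow r w x = true) : rep x * ev w * (rep (act w x))⁻¹ ∈ PiGrp := by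
  induction w generalizing x with
  | nil => simp [ev, act, one_mem]
  | cons s w ih =>
    have main : pathBelow r w (step s x) = true →
        rep x * PresentedGroup.of s * (rep (step s x))⁻¹ ∈ PiGrp →
        rep x * ev (s :: w) * (rep (act (s :: w) x))⁻¹ ∈ PiGrp := fun h1 h2 => by
      have h3 := mul_mem h2 (ih (step_lt s hx) h1)
      have h4 : act (s :: w) x = act w (step s x) := rfl
      rw [h4, ev_cons]
      convert h3 using 1
      group
    cases s with
    | u => exact main h (by
        rw [show rep x * PresentedGroup.of CSgen.u = rep (step .u x) from rep_mul_u x,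
          mul_inv_cancel]; exact one_mem _)
    | v => exact main h (by
        rw [show rep x * PresentedGroup.of CSgen.v = rep (step .v x) from rep_mul_v x,
          mul_inv_cancel]; exact one_mem _)
    | b =>
      simp only [pathBelow, Bool.and_eq_true, Nat.blt_eq] at h
      exact main h.2 (hr x hx h.1)

/-- The relators `b³`, `(buv)³` and `(buvu)²v`, with the initial `b` removed. -/
def tails : List (List CSgen) :=
  [[.b, .b], [.u, .v, .b, .u, .v, .b, .u, .v], [.u, .v, .u, .b, .u, .v, .u, .v]]

lemma tails_spec : ∀ w ∈ tails, gb * ev w = 1 := by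
  intro w hw
  simp only [tails, List.mem_cons, List.not_mem_nil, or_false] at hw
  rcases hw with rfl | rfl | rfl
  · rw [← gb_pow]; simp only [ev, List.map, List.prod_cons, List.prod_nil, mul_one, pow_three, gb]
  · rw [← rel_buv]
    simp only [ev, List.map, List.prod_cons, List.prod_nil, mul_one, pow_three, gb, gu, gv,
      mul_assoc]
  · rw [← rel_buvu]
    simp only [ev, List.map, List.prod_cons, List.prod_nil, mul_one, pow_two, gb, gu, gv,
      mul_assoc]

/-- The `b`-edge at `x` is deduced from the relator `b * w` if the rest of the loop returns to `x`
and uses only edges of smaller rank. -/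
def deduced (x : ℕ) (w : List CSgen) : Bool :=
  pathBelow (rank x) w (stepB x) && Nat.beq (act w (stepB x)) x

/-- Every edge outside the six initial ones is deduced. Starting the loops at each `4 * q + e`
matters: these four codes share one `b`-edge, but the loops from them differ. -/
lemma deduced_all : ∀ q < 216, q ∈ [0, 29, 37, 70, 72, 144] ∨
    ∃ e < 4, ∃ w ∈ tails, deduced (4 * q + e) w = true := by
  decide +kernel

lemma rank_congr {x y : ℕ} (h : x / 4 = y / 4) : rank x = rank y := by
  have h2 : x / 48 = y / 48 := by omega
  rw [rank, rank, h, h2]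

/-- Since no rank is negative, the hypothesis says that the word `w` avoids the letter `b`. -/
lemma rep_mul_ev {w : List CSgen} {x : ℕ} (h : pathBelow 0 w x = true) :
    rep x * ev w = rep (act w x) := by
  induction w generalizing x with
  | nil => simp [ev, act]
  | cons s w ih =>
    cases s with
    | u =>
      have h1 := ih (x := stepU x) h
      rwa [← rep_mul_u, mul_assoc] at h1
    | v =>
      have h1 := ih (x := stepV x) h
      rwa [← rep_mul_v, mul_assoc] at h1
    | b => simp [pathBelow] at h

/-- A positive word for `jⁿ`. -/
def wordJ (n : ℕ) : List CSgen := (List.replicate n [.u, .v, .u, .v]).flatten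

lemma ev_wordJ (n : ℕ) : ev (wordJ n) = gj ^ n := by
  have h : ev [.u, .v, .u, .v] = gj := by
    simp only [ev, List.map, List.prod_cons, List.prod_nil, mul_one, gj, gu, gv, pow_two,
      mul_assoc]
  induction n with
  | zero => simp [wordJ, ev]
  | succ n ih =>
    have h2 : wordJ (n + 1) = [.u, .v, .u, .v] ++ wordJ n := by
      simp [wordJ, List.replicate_succ]
    rw [h2, ev_append, ih, h, pow_succ']

/-- `a₁ = k b k'` with `k` and `k'` given by these positive words in `u` and `v`. -/
def words₁ : List CSgen × List CSgen := ([.v, .u, .v, .v, .v] ++ wordJ 4, [.u, .v] ++ wordJ 2)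

/-- The words for `a₂`, as in `words₁`. -/
def words₂ : List CSgen × List CSgen :=
  ([.v, .v, .u], [.u, .v, .v, .v, .u, .v, .v] ++ wordJ 1)

/-- The words for `a₃`, as in `words₁`. -/
def words₃ : List CSgen × List CSgen :=
  ([.u, .u, .v, .v, .u] ++ wordJ 9, [.v, .v, .v, .u, .v, .v, .v] ++ wordJ 8)

lemma gu_inv : gu⁻¹ = gu * gu :=
  inv_eq_of_mul_eq_one_right gu_cube'

lemma gv_inv : gv⁻¹ = gv * (gv * gv) :=
  inv_eq_of_mul_eq_one_right gv_fourth'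

lemma gb_inv : gb⁻¹ = gb * gb :=
  inv_eq_of_mul_eq_one_right (by rw [← pow_three, gb_pow])

lemma a1_eq : a1 = ev words₁.1 * gb * ev words₁.2 := by
  simp only [words₁, ev_append, ev_wordJ]
  simp only [ev, List.map, List.prod_cons, List.prod_nil, mul_one, a1, gv_inv, mul_assoc]
  rfl

lemma a2_eq : a2 = ev words₂.1 * gb * ev words₂.2 := by
  simp only [words₂, ev_append, ev_wordJ]
  simp only [ev, List.map, List.prod_cons, List.prod_nil, mul_one, a2, gv_inv, mul_assoc, pow_two,
    pow_one]
  rfl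

lemma a3_eq : a3 = ev words₃.1 * gb * ev words₃.2 := by
  simp only [words₃, ev_append, ev_wordJ]
  simp only [ev, List.map, List.prod_cons, List.prod_nil, mul_one, a3, gu_inv, gv_inv, mul_assoc,
    pow_two]
  rfl

/-- An element `k b k'` of `Π` with `k, k' ∈ K` proves the `b`-edge from `k` to `k'⁻¹`. -/
lemma validB_of_words {p : List CSgen × List CSgen} {x : ℕ} (h : pathBelow 0 p.1 0 = true)
    (hx : act p.1 0 = x) (h' : pathBelow 0 p.2 (stepB x) = true) (hx' : act p.2 (stepB x) = 0)
    (hm : ev p.1 * gb * ev p.2 ∈ PiGrp) : ValidB x := by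
  have e1 := rep_mul_ev h
  have e2 := rep_mul_ev h'
  rw [rep_zero, one_mul, hx] at e1
  rw [hx', rep_zero] at e2
  rw [ValidB, ← e1, ← eq_inv_of_mul_eq_one_right e2]
  exact hm

lemma validB_initial {q : ℕ} (hq : q ∈ [0, 29, 37, 70, 72, 144]) : ∃ e < 4, ValidB (4 * q + e) := by
  simp only [List.mem_cons, List.not_mem_nil, or_false] at hq
  rcases hq with rfl | rfl | rfl | rfl | rfl | rfl
  · refine ⟨0, by norm_num, ?_⟩
    rw [ValidB, show stepB (4 * 0 + 0) = 288 by decide +kernel]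
    simp [rep, one_mem]
  · exact ⟨2, by norm_num, validB_of_words (p := words₁) (by decide +kernel) (by decide +kernel)
      (by decide +kernel) (by decide +kernel) (a1_eq ▸ a1_mem)⟩
  · exact ⟨3, by norm_num, validB_of_words (p := words₂) (by decide +kernel) (by decide +kernel)
      (by decide +kernel) (by decide +kernel) (a2_eq ▸ a2_mem)⟩
  · exact ⟨3, by norm_num, validB_of_words (p := words₃) (by decide +kernel) (by decide +kernel)
      (by decide +kernel) (by decide +kernel) (a3_eq ▸ a3_mem)⟩
  · refine ⟨0, by norm_num, ?_⟩
    rw [ValidB, show stepB (4 * 72 + 0) = 576 by decide +kernel]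
    simp [rep, one_mem, pow_two]
  · refine ⟨0, by norm_num, ?_⟩
    rw [ValidB, show stepB (4 * 144 + 0) = 0 by decide +kernel]
    have h : gb ^ 2 * gb = 1 := by rw [← pow_succ, gb_pow]
    simp [rep, one_mem, h]

lemma validB_all : ∀ x < 864, ValidB x := by
  suffices h : ∀ r, ∀ x < 864, rank x = r → ValidB x from fun x hx => h _ x hx rfl
  intro r
  induction r using Nat.strong_induction_on with
  | _ r ih =>
    intro x hx hr
    rcases deduced_all (x / 4) (by omega) with h | ⟨e, he, w, hw, h⟩
    · obtain ⟨e, he, h⟩ := validB_initial h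
      exact h.congr (by omega)
    · have hxy : (4 * (x / 4) + e) / 4 = x / 4 := by omega
      refine ValidB.congr (x := 4 * (x / 4) + e) ?_ hxy
      have hy : 4 * (x / 4) + e < 864 := by omega
      have hry := (rank_congr hxy).trans hr
      generalize 4 * (x / 4) + e = y at h hy hry
      simp only [deduced, Bool.and_eq_true, hry] at h
      obtain ⟨h1, h2⟩ := h
      have h3 := path_sound (fun z hz hzr => ih _ hzr z hz rfl) w (step_lt .b hy) h1
      rw [show act w (step .b y) = y from Nat.eq_of_beq_eq_true h2] at h3
      -- The loop gives `rep (y·b) * b⁻¹ * (rep y)⁻¹ ∈ Π`; invert.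
      rw [← inv_eq_of_mul_eq_one_right (tails_spec w hw)] at h3
      have h4 := inv_mem h3
      rw [ValidB]
      convert h4 using 1
      change _ = (rep (stepB y) * gb⁻¹ * (rep y)⁻¹)⁻¹
      group

/-- Every word takes the coset `Π` to the coset predicted by the table. -/
lemma ev_mem_coset (w : List CSgen) : ev w * (rep (act w 0))⁻¹ ∈ PiGrp := by
  have h : ∀ r w x, (∀ y < 864, rank y < r) → pathBelow r w x = true ∨ 864 ≤ x := by
    intro r w x hr
    induction w generalizing x with
    | nil => exact Or.inl rfl
    | cons s w ih =>
      by_cases hx : x < 864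
      · have h1 := (ih (step s x)).resolve_right (not_le.mpr (step_lt s hx))
        cases s with
        | u => exact Or.inl h1
        | v => exact Or.inl h1
        | b => exact Or.inl (by
            rw [pathBelow, Bool.and_eq_true, Nat.blt_eq]; exact ⟨hr x hx, h1⟩)
      · exact Or.inr (not_lt.mp hx)
  have hr : ∀ y < 864, rank y < 18 := by decide +kernel
  have h1 := path_sound (fun y hy _ => validB_all y hy) w (by norm_num : 0 < 864)
    ((h 18 w 0 hr).resolve_right (by norm_num))
  rwa [rep_zero, one_mul] at h1

lemma exists_ev (g : CS) : ∃ w, g = ev w := by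
  have hinv : ∀ s : CSgen, ∃ w, (PresentedGroup.of s : CS)⁻¹ = ev w := by
    intro s
    cases s with
    | u => exact ⟨[.u, .u], by
        simp only [ev, List.map, List.prod_cons, List.prod_nil, mul_one]; exact gu_inv⟩
    | v => exact ⟨[.v, .v, .v], by
        simp only [ev, List.map, List.prod_cons, List.prod_nil, mul_one]; exact gv_inv⟩
    | b => exact ⟨[.b, .b], by
        simp only [ev, List.map, List.prod_cons, List.prod_nil, mul_one]; exact gb_inv⟩
  induction g using PresentedGroup.induction_on with
  | _ z =>
    induction z using FreeGroup.induction_on with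
    | C1 => exact ⟨[], by simp [ev]⟩
    | of s => exact ⟨[s], by simp [ev, PresentedGroup.of]⟩
    | inv_of s _ => exact hinv s
    | mul x y hx hy =>
      obtain ⟨w₁, h₁⟩ := hx
      obtain ⟨w₂, h₂⟩ := hy
      exact ⟨w₁ ++ w₂, by rw [ev_append, map_mul, h₁, h₂]⟩

/-! ### The permutation action on the table -/

/-- The relators hold for the step functions. -/
lemma relators_act : ∀ x < 864,
    act [.u, .u, .u] x = x ∧ act [.v, .v, .v, .v] x = x ∧ act [.b, .b, .b] x = x ∧
    act [.u, .v, .u, .v] x = act [.v, .u, .v, .u] x ∧ act [.v, .b] x = act [.b, .v] x ∧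
    act [.b, .u, .v, .b, .u, .v, .b, .u, .v] x = x ∧
    act [.b, .u, .v, .u, .b, .u, .v, .u, .v] x = x := by
  decide +kernel

lemma act_cons (s : CSgen) (w : List CSgen) (x : ℕ) : act (s :: w) x = act w (step s x) := rfl

lemma step_injOn (s : CSgen) {x y : ℕ} (hx : x < 864) (hy : y < 864) (h : step s x = step s y) :
    x = y := by
  obtain ⟨hu, hv, hb, -⟩ := relators_act x hx
  obtain ⟨ku, kv, kb, -⟩ := relators_act y hy
  cases s with
  | u => rw [← hu, ← ku, act_cons, h, ← act_cons]
  | v => rw [← hv, ← kv, act_cons, h, ← act_cons]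
  | b => rw [← hb, ← kb, act_cons, h, ← act_cons]

/-- A generator as a permutation of the `864` codes. -/
noncomputable def permGen (s : CSgen) : Equiv.Perm (Fin 864) :=
  Equiv.ofBijective (fun x => ⟨step s x, step_lt s x.2⟩) <|
    Finite.injective_iff_bijective.mp fun x y hxy =>
      Fin.ext (step_injOn s x.2 y.2 (congrArg Fin.val hxy))

lemma permGen_val (s : CSgen) (x : Fin 864) : (permGen s x : ℕ) = step s x := rfl

lemma permGen_relators : ∀ r ∈ csRels,
    FreeGroup.lift (fun s => MulOpposite.op (permGen s)) r = 1 := by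
  have hop : ∀ p q : (Equiv.Perm (Fin 864))ᵐᵒᵖ,
      (∀ x, (p.unop x : ℕ) = q.unop x) → p = q := fun p q h =>
    MulOpposite.unop_injective (Equiv.ext fun x => Fin.ext (h x))
  have rel := relators_act
  simp only [act, List.foldl_cons, List.foldl_nil] at rel
  intro r hr
  simp only [csRels, Set.mem_insert_iff, Set.mem_singleton_iff] at hr
  rcases hr with rfl | rfl | rfl | rfl | rfl | rfl | rfl <;>
    simp only [map_mul, map_pow, map_inv, FreeGroup.lift_apply_of, mul_inv_eq_one] <;>
    refine hop _ _ fun x => ?_ <;>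
    simp only [pow_succ, pow_zero, one_mul, MulOpposite.unop_mul, MulOpposite.unop_op,
      MulOpposite.unop_one, Equiv.Perm.mul_apply, Equiv.Perm.one_apply, permGen_val]
  · exact (rel x x.2).1
  · exact (rel x x.2).2.1
  · exact (rel x x.2).2.2.1
  · exact (rel x x.2).2.2.2.1
  · exact (rel x x.2).2.2.2.2.1
  · exact (rel x x.2).2.2.2.2.2.1
  · exact (rel x x.2).2.2.2.2.2.2

/-- The right action of `G` on codes, as a homomorphism to the opposite of the permutation group. -/
noncomputable def toPerm : CS →* (Equiv.Perm (Fin 864))ᵐᵒᵖ :=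
  PresentedGroup.toGroup permGen_relators

lemma toPerm_ev (w : List CSgen) (x : Fin 864) : ((toPerm (ev w)).unop x : ℕ) = act w x := by
  induction w generalizing x with
  | nil => simp [ev, act]
  | cons s w ih =>
    rw [ev_cons, map_mul, MulOpposite.unop_mul, Equiv.Perm.mul_apply, ih]
    simp only [toPerm, PresentedGroup.toGroup.of, MulOpposite.unop_op, permGen_val, act_cons]

lemma toPerm_mem {g : CS} (hg : g ∈ PiGrp) : (toPerm g).unop 0 = 0 := by
  have base : ∀ p : List CSgen × List CSgen, act (p.1 ++ [.b] ++ p.2) 0 = 0 →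
      (toPerm (ev p.1 * gb * ev p.2)).unop 0 = 0 := fun p h => by
    have hb : gb = ev [.b] := by simp [ev, gb]
    rw [hb, ← ev_append, ← ev_append]
    exact Fin.ext ((toPerm_ev _ 0).trans h)
  induction hg using Subgroup.closure_induction with
  | mem x hx =>
    simp only [Set.mem_insert_iff, Set.mem_singleton_iff] at hx
    rcases hx with rfl | rfl | rfl
    · rw [a1_eq]; exact base words₁ (by decide +kernel)
    · rw [a2_eq]; exact base words₂ (by decide +kernel)
    · rw [a3_eq]; exact base words₃ (by decide +kernel)
  | one => simp
  | mul x y _ _ hx hy => rw [map_mul, MulOpposite.unop_mul, Equiv.Perm.mul_apply, hx, hy]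
  | inv x _ hx => rw [map_inv, MulOpposite.unop_inv, Equiv.Perm.inv_eq_iff_eq, hx]

/-- A positive word for `rep x`. -/
def wordRep (x : ℕ) : List CSgen :=
  List.replicate (x / 288) .b ++ (List.replicate (x / 48 % 3) .u ++
    (List.replicate (x / 144 % 2) [.v, .u, .u]).flatten ++ wordJ (x / 4 % 12) ++
    List.replicate (x % 4) .v)

lemma ev_replicate (k : ℕ) (s : CSgen) : ev (List.replicate k s) = PresentedGroup.of s ^ k := by
  simp [ev]

lemma ev_wordRep (x : ℕ) : ev (wordRep x) = rep x := by
  have h : ev (List.replicate (x / 144 % 2) [.v, .u, .u]).flatten =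
      (gv * gu ^ 2) ^ (x / 144 % 2) := by
    rcases Nat.mod_two_eq_zero_or_one (x / 144) with h | h <;> rw [h] <;>
      simp [ev, gv, gu, pow_two]
  simp only [wordRep, ev_append, ev_replicate, ev_wordJ, h]
  rfl

lemma act_wordRep : ∀ x < 864, act (wordRep x) 0 = x := by
  decide +kernel

/-- Distinct codes represent distinct cosets of `Π`. -/
lemma rep_coset_inj {x y : ℕ} (hx : x < 864) (hy : y < 864) (h : rep x * (rep y)⁻¹ ∈ PiGrp) :
    x = y := by
  have point : ∀ z < 864, ((toPerm (rep z)).unop 0 : ℕ) = z := fun z hz => by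
    rw [← ev_wordRep, toPerm_ev]; exact act_wordRep z hz
  have h1 : rep x = rep x * (rep y)⁻¹ * rep y := by group
  rw [← point x hx, h1, map_mul, MulOpposite.unop_mul, Equiv.Perm.mul_apply, toPerm_mem h,
    point y hy]

/-! ### Codes and pairs `(m, k)` -/

lemma rep_mul_K {k : CS} (hk : k ∈ Kgp) :
    ∀ x < 864, ∃ y < 864, y / 288 = x / 288 ∧ rep x * k = rep y := by
  have hs : ∀ s ∈ ({gu, gv} : Set CS), ∀ x < 864,
      ∃ y < 864, y / 288 = x / 288 ∧ rep x * s = rep y := by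
    intro s hs x hx
    obtain ⟨⟨h1, h2, -⟩, h3, h4⟩ := step_table x hx
    rcases hs with rfl | rfl
    · exact ⟨_, h1, h3, rep_mul_u x⟩
    · exact ⟨_, h2, h4, rep_mul_v x⟩
  have hm : ∀ k l : CS, (∀ x < 864, ∃ y < 864, y / 288 = x / 288 ∧ rep x * k = rep y) →
      (∀ x < 864, ∃ y < 864, y / 288 = x / 288 ∧ rep x * l = rep y) →
      ∀ x < 864, ∃ y < 864, y / 288 = x / 288 ∧ rep x * (k * l) = rep y := by
    intro k l hk hl x hx
    obtain ⟨y, hy, h1, h2⟩ := hk x hx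
    obtain ⟨z, hz, h3, h4⟩ := hl y hy
    exact ⟨z, hz, h3.trans h1, by rw [← mul_assoc, h2, h4]⟩
  induction hk using Subgroup.closure_induction_right with
  | one => exact fun x hx => ⟨x, hx, rfl, mul_one _⟩
  | mul_right k _ s h ih => exact hm _ _ ih (hs s h)
  | mul_inv_cancel k _ s h ih =>
    refine hm _ _ ih ?_
    have h2 := hm _ _ (hs s h) (hs s h)
    rcases h with rfl | rfl
    · rw [gu_inv]; exact h2
    · rw [gv_inv]; exact hm _ _ (hs _ (by simp)) h2

/-- The exponent `m ∈ {0, 1, -1}` of `b` in the representative with code `x`. -/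
def expB (x : ℕ) : ℤ := if x / 288 = 2 then -1 else (x / 288 : ℕ)

lemma expB_mem {x : ℕ} (hx : x < 864) : expB x ∈ ({-1, 0, 1} : Set ℤ) := by
  have h : x / 288 = 0 ∨ x / 288 = 1 ∨ x / 288 = 2 := by omega
  rcases h with h | h | h <;> simp [expB, h]

lemma rep_eq_expB {x : ℕ} (hx : x < 864) : rep x = gb ^ expB x * rep (x % 288) := by
  have h : x / 288 = 0 ∨ x / 288 = 1 ∨ x / 288 = 2 := by omega
  have hb : gb ^ (x / 288) = gb ^ expB x := by
    rcases h with h | h | h <;> simp [expB, h, gb_inv, pow_two]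
  have h0 : x % 288 / 288 = 0 := by omega
  have h1 : x % 288 / 48 % 3 = x / 48 % 3 := by omega
  have h2 : x % 288 / 144 % 2 = x / 144 % 2 := by omega
  have h3 : x % 288 / 4 % 12 = x / 4 % 12 := by omega
  have h4 : x % 288 % 4 = x % 4 := by omega
  rw [rep, rep, hb, h0, h1, h2, h3, h4, pow_zero, one_mul]

lemma rep_mem_K {x : ℕ} (hx : x < 288) : rep x ∈ Kgp := by
  have hu : gu ∈ Kgp := Subgroup.subset_closure (by simp)
  have hv : gv ∈ Kgp := Subgroup.subset_closure (by simp)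
  have hj : gj ∈ Kgp := pow_mem (mul_mem hu hv) 2
  rw [rep, Nat.div_eq_of_lt hx, pow_zero, one_mul]
  exact mul_mem (mul_mem (mul_mem (pow_mem hu _) (pow_mem (mul_mem hv (pow_mem hu 2)) _))
    (pow_mem hj _)) (pow_mem hv _)

/-- Every product `bᵐk` is some `rep x`, and `x` determines `m` and `k`. -/
lemma exists_code {m : ℤ} {k : CS} (hm : m ∈ ({-1, 0, 1} : Set ℤ)) (hk : k ∈ Kgp) :
    ∃ x < 864, gb ^ m * k = rep x ∧ m = expB x ∧ k = rep (x % 288) := by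
  obtain ⟨c, hc, hcm⟩ : ∃ c < 3, m = expB (288 * c) := by
    rcases hm with rfl | rfl | rfl
    · exact ⟨2, by norm_num, by simp [expB]⟩
    · exact ⟨0, by norm_num, by simp [expB]⟩
    · exact ⟨1, by norm_num, by simp [expB]⟩
  obtain ⟨x, hx, h1, h2⟩ := rep_mul_K hk (288 * c) (by omega)
  have h3 : rep (288 * c) = gb ^ m := by
    rw [rep_eq_expB (by omega), ← hcm, Nat.mul_mod_right, rep_zero, mul_one]
  have h4 : m = expB x := by rw [hcm, expB, expB, h1]
  rw [h3] at h2
  refine ⟨x, hx, h2, h4, ?_⟩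
  rw [rep_eq_expB hx, ← h4] at h2
  exact mul_left_cancel h2

/-- every element of `G` lies in the coset `Π bᵐ k` for exactly one
pair `(m, k)` with `m ∈ {−1, 0, 1}` and `k ∈ K`. -/
theorem stmt_5 (g : CS) :
    ∃! p : ℤ × CS,
      p.1 ∈ ({-1, 0, 1} : Set ℤ) ∧ p.2 ∈ Kgp ∧ g * (gb ^ p.1 * p.2)⁻¹ ∈ PiGrp := by
  obtain ⟨w, rfl⟩ := exists_ev g
  have hx : act w 0 < 864 := act_lt w (by norm_num)
  have hmem := ev_mem_coset w
  generalize act w 0 = x at hx hmem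
  refine ⟨(expB x, rep (x % 288)), ⟨expB_mem hx, rep_mem_K (Nat.mod_lt _ (by norm_num)), ?_⟩, ?_⟩
  · rw [← rep_eq_expB hx]
    exact hmem
  · rintro ⟨m, k⟩ ⟨hm, hk, h⟩
    obtain ⟨y, hy, h1, rfl, rfl⟩ := exists_code hm hk
    simp only [h1] at h
    have hxy : rep x * (rep y)⁻¹ ∈ PiGrp := by
      have h2 := mul_mem (inv_mem hmem) h
      convert h2 using 1
      group
    rw [rep_coset_inj hx hy hxy]
end

section
/- For every π ∈ Π, writing f(π) = (m, n), one has f(j⁴πj⁻⁴) = (n, −m−n); equivalently, conjugation by j⁴ induces on Π/[Π,Π] ≅ ℤ² the automorphism given by right multiplication by the matrix with rows (0, −1) and (1, −1). -/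
namespace CartwrightSteger

/-! ### Words and their values -/

/-- The alphabet of the rewriting system: `u`, `v`, `b`, `j = (uv)²` and `i = j⁻¹`. -/
inductive Letter : Type
  | u | v | b | j | i
  deriving DecidableEq

/-- Words in the alphabet; inverses of `u`, `v`, `b` are written as positive powers. -/
abbrev Word : Type := List Letter

/-- An equation between two words, read from left to right as a rewriting rule. -/
abbrev Rule : Type := Word × Word

/-- The group element denoted by a letter. -/
def val : Letter → CS
  | .u => gu
  | .v => gv
  | .b => gb
  | .j => gj
  | .i => gj⁻¹

/-- The group element denoted by a word. -/
def eval (w : Word) : CS := (w.map val).prod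

@[simp] lemma eval_nil : eval [] = 1 := rfl

@[simp] lemma eval_cons (x : Letter) (w : Word) : eval (x :: w) = val x * eval w := by
  simp [eval]

@[simp] lemma eval_append (w w' : Word) : eval (w ++ w') = eval w * eval w' := by
  simp [eval]

@[simp] lemma eval_replicate (n : ℕ) (x : Letter) : eval (List.replicate n x) = val x ^ n := by
  simp [eval]

/-- A rule holds when its two sides denote the same group element. -/
def Holds (r : Rule) : Prop := eval r.1 = eval r.2

/-! ### Relations of the presentation -/

lemma gu_pow : gu ^ 3 = 1 :=
  PresentedGroup.one_of_mem (rels := csRels) (x := FreeGroup.of CSgen.u ^ 3) (by simp [csRels])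

lemma gv_pow : gv ^ 4 = 1 :=
  PresentedGroup.one_of_mem (rels := csRels) (x := FreeGroup.of CSgen.v ^ 4) (by simp [csRels])

lemma gb_pow : gb ^ 3 = 1 :=
  PresentedGroup.one_of_mem (rels := csRels) (x := FreeGroup.of CSgen.b ^ 3) (by simp [csRels])

lemma gj_eq : (gv * gu) ^ 2 = gj := by
  have h : (gu * gv) ^ 2 * ((gv * gu) ^ 2)⁻¹ = 1 :=
    PresentedGroup.one_of_mem (rels := csRels)
      (x := (FreeGroup.of CSgen.u * FreeGroup.of CSgen.v) ^ 2 *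
        ((FreeGroup.of CSgen.v * FreeGroup.of CSgen.u) ^ 2)⁻¹) (by simp [csRels])
  exact (mul_inv_eq_one.mp h).symm

lemma gv_gb : gv * gb = gb * gv := by
  have h : gv * gb * (gb * gv)⁻¹ = 1 :=
    PresentedGroup.one_of_mem (rels := csRels)
      (x := FreeGroup.of CSgen.v * FreeGroup.of CSgen.b *
        (FreeGroup.of CSgen.b * FreeGroup.of CSgen.v)⁻¹) (by simp [csRels])
  exact mul_inv_eq_one.mp h

lemma buv_pow : (gb * gu * gv) ^ 3 = 1 :=
  PresentedGroup.one_of_mem (rels := csRels)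
    (x := (FreeGroup.of CSgen.b * FreeGroup.of CSgen.u * FreeGroup.of CSgen.v) ^ 3)
    (by simp [csRels])

lemma buvu_sq : (gb * gu * gv * gu) ^ 2 * gv = 1 :=
  PresentedGroup.one_of_mem (rels := csRels)
    (x := (FreeGroup.of CSgen.b * FreeGroup.of CSgen.u * FreeGroup.of CSgen.v *
      FreeGroup.of CSgen.u) ^ 2 * FreeGroup.of CSgen.v) (by simp [csRels])

lemma gu_inv : gu⁻¹ = gu * gu :=
  inv_eq_of_mul_eq_one_right (by simpa [pow_succ, mul_assoc] using gu_pow)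

lemma gv_inv : gv⁻¹ = gv * (gv * gv) :=
  inv_eq_of_mul_eq_one_right (by simpa [pow_succ, mul_assoc] using gv_pow)

lemma gb_inv : gb⁻¹ = gb * gb :=
  inv_eq_of_mul_eq_one_right (by simpa [pow_succ, mul_assoc] using gb_pow)

/-- A word denoting the inverse of a letter. -/
def letterInv : Letter → Word
  | .u => [.u, .u]
  | .v => [.v, .v, .v]
  | .b => [.b, .b]
  | .j => [.i]
  | .i => [.j]

/-- A word denoting the inverse of a word. -/
def wordInv : Word → Word
  | [] => []
  | x :: w => wordInv w ++ letterInv x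

lemma eval_letterInv (x : Letter) : eval (letterInv x) = (val x)⁻¹ := by
  cases x <;> simp [letterInv, val, gu_inv, gv_inv, gb_inv]

@[simp] lemma eval_wordInv (w : Word) : eval (wordInv w) = (eval w)⁻¹ := by
  induction w with
  | nil => simp [wordInv]
  | cons x w ih => simp [wordInv, ih, eval_letterInv]

/-! ### Chains of replacements -/

/-- `stripPrefix l w` is the rest of `w` after the prefix `l`, if `l` is a prefix of `w`. -/
def stripPrefix : Word → Word → Option Word
  | [], w => some w
  | _ :: _, [] => none
  | x :: l, y :: w => if x = y then stripPrefix l w else none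

lemma eq_append_of_stripPrefix {l w t : Word} (h : stripPrefix l w = some t) : w = l ++ t := by
  induction l generalizing w with
  | nil => simpa [stripPrefix] using h
  | cons x l ih =>
    cases w with
    | nil => simp [stripPrefix] at h
    | cons y w =>
      by_cases hxy : x = y
      · have h' : stripPrefix l w = some t := by simpa [stripPrefix, hxy] using h
        rw [hxy, ih h', List.cons_append]
      · simp [stripPrefix, hxy] at h

/-- A replacement `(p, k, d)`: at position `p` of the word, one side of the rule with index `k` is
replaced by the other, from left to right if `d` is true and from right to left otherwise. -/
abbrev Step : Type := ℕ × ℕ × Bool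

/-- Performs one replacement, if the rule exists and matches at the given position. -/
def runStep (R : List Rule) (w : Word) (s : Step) : Option Word :=
  match R[s.2.1]? with
  | none => none
  | some r =>
    match stripPrefix (bif s.2.2 then r.1 else r.2) (w.drop s.1) with
    | none => none
    | some t => some (w.take s.1 ++ ((bif s.2.2 then r.2 else r.1) ++ t))

/-- Performs a chain of replacements. -/
def runSteps (R : List Rule) : Word → List Step → Option Word
  | w, [] => some w
  | w, s :: ss =>
    match runStep R w s with
    | none => none
    | some w' => runSteps R w' ss

lemma eval_runStep {R : List Rule} (hR : ∀ r ∈ R, Holds r) {w w' : Word} {s : Step}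
    (h : runStep R w s = some w') : eval w = eval w' := by
  obtain ⟨p, k, d⟩ := s
  unfold runStep at h
  split at h
  · simp at h
  · next r hr =>
    have hv : eval r.1 = eval r.2 := hR r (List.mem_of_getElem? hr)
    split at h
    · simp at h
    · next t ht =>
      have hw := List.take_append_drop p w
      rw [eq_append_of_stripPrefix ht] at hw
      rw [← hw, ← Option.some.inj h]
      cases d <;> simp [hv]

lemma eval_runSteps {R : List Rule} (hR : ∀ r ∈ R, Holds r) {w w' : Word} {ss : List Step}
    (h : runSteps R w ss = some w') : eval w = eval w' := by
  induction ss generalizing w with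
  | nil => simp [runSteps] at h; rw [h]
  | cons s ss ih =>
    unfold runSteps at h
    split at h
    · simp at h
    · next hs => exact (eval_runStep hR hs).trans (ih h)

/-- Extends a list of rules by further ones, checking that each of them is obtained by its chain of
replacements from the rules before it; `none` if a chain fails. -/
def extend : List Rule → List (Word × Word × List Step) → Option (List Rule)
  | R, [] => some R
  | R, e :: es =>
    match runSteps R e.1 e.2.2 with
    | none => none
    | some w => if w = e.2.1 then extend (R ++ [(e.1, e.2.1)]) es else none

lemma holds_of_extend {R R' : List Rule} {es : List (Word × Word × List Step)}
    (hR : ∀ r ∈ R, Holds r) (h : extend R es = some R') : ∀ r ∈ R', Holds r := by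
  induction es generalizing R with
  | nil => simp [extend] at h; rwa [← h]
  | cons e es ih =>
    unfold extend at h
    split at h
    · simp at h
    · next w hw =>
      split at h
      · next hs =>
        refine ih (fun r hr => ?_) h
        rcases List.mem_append.mp hr with hr | hr
        · exact hR r hr
        · rw [List.mem_singleton.mp hr]
          exact (eval_runSteps hR hw).trans (by rw [hs])
      · simp at h

/-! ### Reduction by a rewriting system -/

/-- The first rule whose left side, reversed, is a prefix of the stack `s`; returns the
remaining stack and the right side of the rule. The rules are given with reversed left sides. -/
def findRule : List Rule → Word → Option (Word × Word)
  | [], _ => none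
  | r :: R, s =>
    match stripPrefix r.1 s with
    | some t => some (t, r.2)
    | none => findRule R s

/-- Reduces the word `s.reverse ++ w`, where the part `s.reverse` is already irreducible. The letters
of `w` are moved to the stack `s` one at a time, and a rule is applied whenever its left side appears
on top of the stack. The first argument bounds the number of letters moved. -/
def reduce (R : List Rule) : ℕ → Word → Word → Word
  | 0, s, w => s.reverse ++ w
  | _ + 1, s, [] => s.reverse
  | n + 1, s, x :: w =>
    match findRule R (x :: s) with
    | some (t, r) => reduce R n t (r ++ w)
    | none => reduce R n (x :: s) w

lemma eval_findRule {R : List Rule} (hR : ∀ r ∈ R, Holds (r.1.reverse, r.2)) {s t q : Word}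
    (h : findRule R s = some (t, q)) : eval s.reverse = eval t.reverse * eval q := by
  induction R with
  | nil => simp [findRule] at h
  | cons r R ih =>
    unfold findRule at h
    split at h
    · next t' ht =>
      have hv : eval r.1.reverse = eval r.2 := hR r List.mem_cons_self
      simp only [Option.some.injEq, Prod.mk.injEq] at h
      rw [eq_append_of_stripPrefix ht, List.reverse_append, eval_append, hv, h.1, h.2]
    · exact ih (fun r' hr' => hR r' (List.mem_cons_of_mem _ hr')) h

lemma eval_reduce {R : List Rule} (hR : ∀ r ∈ R, Holds (r.1.reverse, r.2)) (n : ℕ) (s w : Word) :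
    eval (reduce R n s w) = eval s.reverse * eval w := by
  induction n generalizing s w with
  | zero => simp [reduce]
  | succ n ih =>
    cases w with
    | nil => simp [reduce]
    | cons x w =>
      unfold reduce
      split
      · next t q h =>
        have h' := eval_findRule hR h
        rw [ih, eval_append, ← mul_assoc, ← h']
        simp [mul_assoc]
      · rw [ih]; simp [mul_assoc]

/-! ### The rules -/

open Letter

/-- Ten equations immediate from the presentation and from `j = (uv)²`, `i = j⁻¹`. -/
def presRules : List Rule :=
  [([u, u, u], []),
   ([v, v, v, v], []),
   ([b, b, b], []),
   ([u, v, u, v], [j]),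
   ([v, u, v, u], [j]),
   ([i, j], []),
   ([j, i], []),
   ([b, v], [v, b]),
   ([b, u, v, b, u, v, b, u, v], []),
   ([b, u, v, u, b, u, v, u, v], [])]

lemma holds_presRules : ∀ r ∈ presRules, Holds r := by
  have h1 := gu_pow
  have h2 := gv_pow
  have h3 := gb_pow
  have h4 := gj_eq
  have h5 := buv_pow
  have h6 := buvu_sq
  simp only [pow_succ, pow_zero, one_mul, mul_assoc] at h1 h2 h3 h4 h5 h6
  have h7 : gu * (gv * (gu * gv)) = gj := by simp [gj, pow_succ, mul_assoc]
  rw [h7] at h6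
  simp [presRules, Holds, val, h1, h2, h3, h4, h5, h6, h7, gv_gb]

/-- The derived equations, in the order of derivation. The chain of replacements in the third
component leads from the left side to the right side. Rules are numbered from `0`, starting with
those of `presRules`. -/
def derived : List (Word × Word × List Step) :=
  [([j, v], [v, j],
      [(0, 4, false), (1, 3, true)]),
   ([i, v], [v, i],
      [(2, 6, false), (1, 10, false), (0, 5, true)]),
   ([j, u], [u, j],
      [(0, 3, false), (1, 4, true)]),
   ([i, u], [u, i],
      [(2, 6, false), (1, 12, false), (0, 5, true)]),
   ([v, u, v], [u, u, j],
      [(0, 0, false), (2, 3, true)]),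
   ([v, v, v, j], [u, v, u],
      [(2, 10, false), (1, 10, false), (0, 10, false), (0, 3, false), (3, 1, true)]),
   ([u, v, u, u, i], [v, v, v, u],
      [(3, 13, false), (0, 15, false), (3, 6, true)]),
   ([u, u, v, v, v], [v, u, i],
      [(5, 6, false), (2, 15, true), (0, 0, true)]),
   ([u, v, u, u, v], [v, v, u, u, j, j],
      [(0, 15, false), (3, 12, true), (4, 10, true), (2, 14, true)]),
   ([i, i, i, i, i, i], [j, j, j, j, j, j],
      [(0, 1, false), (4, 0, false), (6, 13, false), (7, 13, false), (8, 13, false),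
       (9, 13, false), (10, 13, false), (11, 13, false), (5, 13, false), (6, 13, false),
       (7, 13, false), (3, 17, false), (7, 11, false), (8, 11, false), (6, 11, false),
       (7, 11, false), (5, 11, false), (4, 13, false), (2, 17, false), (6, 14, true),
       (8, 6, true), (10, 13, false), (9, 11, false), (9, 0, false), (11, 13, false),
       (7, 16, true), (11, 15, false), (14, 6, true), (9, 14, true), (11, 10, true),
       (12, 10, true), (13, 6, true), (5, 14, true), (7, 10, true), (8, 12, true), (9, 12, true),
       (10, 10, true), (6, 18, true), (12, 10, true), (11, 10, true), (10, 10, true),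
       (4, 14, true), (2, 0, true), (3, 10, true), (4, 12, true), (5, 12, true), (6, 10, true),
       (2, 18, true), (11, 12, true), (10, 12, true), (9, 12, true), (8, 12, true),
       (7, 12, true), (6, 12, true), (4, 0, true), (0, 1, true)]),
   ([j, j, j, j, j, j, j], [i, i, i, i, i],
      [(0, 19, false), (5, 5, true)]),
   ([b, u, u, j], [v, b, u, v],
      [(1, 14, false), (0, 7, true)]),
   ([b, u, v, u], [v, v, v, b, j],
      [(1, 15, false), (0, 7, true), (1, 7, true), (2, 7, true)]),
   ([b, u, v, i], [v, v, v, b, u, u],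
      [(3, 0, false), (5, 13, false), (1, 16, true), (0, 7, true), (1, 7, true), (2, 7, true)]),
   ([b, u, u, v, u, j], [v, b, u, v, v, u],
      [(4, 12, false), (3, 10, false), (0, 21, true)]),
   ([b, u, u, v, u, u, j], [v, b, u, v, v, u, u],
      [(5, 12, false), (0, 24, true)]),
   ([b, u, v, v, u, u, v], [v, v, v, b, u, v, v, u, u, j, j, j],
      [(7, 5, false), (6, 11, false), (5, 13, false), (4, 13, false), (3, 11, false),
       (0, 23, true), (5, 18, true)]),
   ([b, j, b], [v, i],
      [(3, 6, false), (0, 1, false), (3, 7, false), (4, 10, false), (5, 7, false),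
       (6, 10, false), (2, 7, false), (3, 10, false), (1, 7, false), (2, 10, false),
       (1, 1, false), (4, 7, false), (5, 10, false), (6, 22, false), (1, 22, false), (1, 9, true)]),
   ([b, b], [u, v, u, b, j],
      [(0, 0, false), (3, 6, false), (1, 14, false), (3, 27, false), (5, 2, true)]),
   ([b, j, j, j, b, j], [v, v, v, i, b, i, b],
      [(0, 1, false), (1, 22, false), (4, 12, false), (5, 12, false), (3, 10, false),
       (4, 10, false), (2, 12, false), (3, 12, false), (4, 28, false), (1, 5, false),
       (2, 0, false), (3, 14, false), (5, 7, false), (6, 10, false), (7, 10, false),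
       (8, 7, false), (2, 28, false), (3, 27, true), (2, 7, true), (4, 11, true), (3, 7, true),
       (1, 11, true), (2, 11, true)]),
   ([b, i, b, u, i], [v, j, b, j, j, j, b, u],
      [(3, 13, false), (0, 6, false), (1, 1, false), (2, 29, false), (7, 6, true), (0, 10, true)]),
   ([b, j, j, j, b, u, v], [v, v, i, b, i, b, u, u],
      [(7, 6, false), (6, 10, false), (5, 12, false), (0, 29, true), (6, 23, true),
       (5, 11, true), (4, 7, true), (3, 11, true), (0, 1, true), (2, 11, true), (1, 7, true),
       (0, 11, true), (3, 11, true), (2, 7, true), (1, 11, true)]),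
   ([b, i, b, u, v, v, u, u, j, j, j, j], [u, v, u, b, j, j, j, b, u, u, v, v, u, i, i, i, i],
      [(7, 12, false), (8, 12, false), (9, 12, false), (10, 12, false), (0, 6, false),
       (1, 1, false), (4, 11, false), (5, 7, false), (6, 11, false), (7, 24, false),
       (1, 29, false), (6, 12, true), (7, 12, true), (5, 21, true), (4, 10, true), (3, 10, true),
       (2, 10, true), (1, 7, true), (16, 6, false), (11, 19, false), (10, 13, false),
       (9, 11, false), (6, 23, true), (11, 15, false), (14, 6, true), (13, 11, false),
       (12, 11, false), (9, 23, true), (6, 1, true), (5, 10, true), (4, 10, true), (3, 10, true),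
       (2, 7, true), (6, 10, true), (5, 10, true), (4, 10, true), (3, 7, true), (0, 10, true),
       (1, 10, true), (2, 10, true), (0, 15, true), (15, 13, true), (14, 13, true),
       (13, 13, true), (12, 13, true)]),
   ([b, u, b], [u, b, u],
      [(3, 0, false), (2, 1, false), (3, 23, false), (5, 27, false), (6, 4, false), (5, 7, true),
       (0, 8, true)]),
   ([b, u, v, v, v, b], [u, b, u, v, v, v],
      [(4, 7, false), (3, 7, false), (2, 7, false), (0, 33, true)]),
   ([b, u, j, b], [v, u, i, b, u, u],
      [(1, 0, false), (3, 14, false), (5, 7, false), (6, 6, false), (2, 28, false),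
       (0, 33, true), (1, 33, true), (4, 11, true), (2, 23, true), (0, 17, true)]),
   ([b, u, v, j, b], [v, u, i, b, u, u, v],
      [(2, 10, false), (3, 7, false), (0, 35, true)]),
   ([b, u, u, b, u], [u, b, u, u, b],
      [(2, 33, false), (0, 33, true)]),
   ([b, u, v, j, j, b, j], [v, u, i, b, u, u, v, v, b],
      [(2, 10, false), (3, 10, false), (4, 7, false), (5, 10, false), (1, 12, false),
       (0, 1, false), (1, 22, false), (4, 14, false), (6, 7, false), (7, 10, false),
       (0, 21, false), (2, 12, false), (3, 28, false), (0, 35, true), (6, 7, true), (7, 7, true)])]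

/-- All rules: those of `presRules` followed by the derived ones. -/
def allRules : List Rule := presRules ++ derived.map fun e => (e.1, e.2.1)

lemma chains_check : extend presRules derived = some allRules := by
  decide +kernel

lemma holds_allRules : ∀ r ∈ allRules, Holds r :=
  holds_of_extend holds_presRules chains_check

/-- The rules used for reduction, selected by their index, with reversed left sides. -/
def system : List Rule :=
  [0, 1, 5, 6, 7, 10, 11, 12, 13, 14, 15, 16, 17, 19, 20, 21, 22, 23,
    24, 25, 26, 27, 28, 30, 31, 32, 34, 35, 36, 37, 38].filterMap fun k => allRules[k]?.map fun r => (r.1.reverse, r.2)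

lemma holds_system : ∀ r ∈ system, Holds (r.1.reverse, r.2) := by
  intro r hr
  obtain ⟨k, -, hk⟩ := List.mem_filterMap.mp hr
  obtain ⟨q, hq, rfl⟩ := Option.map_eq_some_iff.mp hk
  simpa using holds_allRules q (List.mem_of_getElem? hq)

/-- Two words denote the same element if their reductions coincide. The bound `10000` exceeds the
number of letters moved in the reductions below. -/
lemma eval_eq_of_reduce {w w' : Word}
    (h : reduce system 10000 [] w = reduce system 10000 [] w') :
    eval w = eval w' := by
  have h1 := eval_reduce holds_system 10000 [] w
  have h2 := eval_reduce holds_system 10000 [] w'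
  rw [h, h2] at h1
  simpa using h1.symm

/-! ### Conjugation of the generators by `j⁴` -/

/-- A word for `a₁`. -/
def w1 : Word := [v, u, v, v, v, j, j, j, j, b, u, v, j, j]

/-- A word for `a₂`. -/
def w2 : Word := [v, v, u, b, u, v, v, v, u, v, v, j]

/-- A word for `a₃`. -/
def w3 : Word :=
  [u, u, v, v, u] ++ (List.replicate 9 j ++ ([b, v, v, v, u, v, v, v] ++ List.replicate 8 j))

lemma eval_w1 : eval w1 = a1 := by
  simp [w1, a1, val, gv_inv, pow_succ, mul_assoc]

lemma eval_w2 : eval w2 = a2 := by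
  simp [w2, a2, val, gv_inv, pow_succ, mul_assoc]

lemma eval_w3 : eval w3 = a3 := by
  simp [w3, a3, val, gu_inv, gv_inv, pow_succ, mul_assoc]

/-- The word for the conjugate of a word by `j⁴`. -/
def conjWord (w : Word) : Word := [j, j, j, j] ++ (w ++ [i, i, i, i])

lemma eval_conjWord (w : Word) : eval (conjWord w) = gj ^ 4 * eval w * (gj ^ 4)⁻¹ := by
  simp [conjWord, val, pow_succ, mul_assoc]

lemma conj_a2 : gj ^ 4 * a2 * (gj ^ 4)⁻¹ = a3⁻¹ := by
  have h : eval (conjWord w2) = eval (wordInv w3) := eval_eq_of_reduce (by decide +kernel)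
  simpa only [eval_conjWord, eval_wordInv, eval_w2, eval_w3] using h

lemma conj_a1 : gj ^ 4 * a1 * (gj ^ 4)⁻¹ =
    a3 * (a2⁻¹ * (a2⁻¹ * (a2⁻¹ * (a3 * (a3 * (a3 * a1)))))) := by
  have h : eval (conjWord w1) = eval (w3 ++ (wordInv w2 ++ (wordInv w2 ++ (wordInv w2 ++
      (w3 ++ (w3 ++ (w3 ++ w1))))))) := eval_eq_of_reduce (by decide +kernel)
  simpa only [eval_conjWord, eval_append, eval_wordInv, eval_w1, eval_w2, eval_w3] using h

lemma conj_a3 : gj ^ 4 * a3 * (gj ^ 4)⁻¹ =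
    a1⁻¹ * (a2⁻¹ * (a1 * (a2 * (a2 * (a1⁻¹ * (a2⁻¹ * (a1 * (a3⁻¹ *
      (a1⁻¹ * (a2 * a1)))))))))) := by
  have h : eval (conjWord w3) = eval (wordInv w1 ++ (wordInv w2 ++ (w1 ++ (w2 ++ (w2 ++
      (wordInv w1 ++ (wordInv w2 ++ (w1 ++ (wordInv w3 ++ (wordInv w1 ++ (w2 ++ w1))))))))))) :=
    eval_eq_of_reduce (by decide +kernel)
  simpa only [eval_conjWord, eval_append, eval_wordInv, eval_w1, eval_w2, eval_w3] using h

/-- The automorphism `(m, n) ↦ (n, -m-n)` of `ℤ²`. -/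
def rot : Multiplicative (ℤ × ℤ) →* Multiplicative (ℤ × ℤ) where
  toFun x := Multiplicative.ofAdd (x.toAdd.2, -x.toAdd.1 - x.toAdd.2)
  map_one' := rfl
  map_mul' x y := by
    apply Multiplicative.toAdd.injective
    ext <;> simp
    ring

end CartwrightSteger

open CartwrightSteger in
/-- for every `π ∈ Π` with `f(π) = (m, n)` one has
`f(j⁴πj⁻⁴) = (n, −m−n)`, i.e. conjugation by `j⁴` induces on `Π/[Π,Π] ≅ ℤ²`
right multiplication by the matrix with rows `(0, −1)` and `(1, −1)`. -/
theorem stmt_9 (f : ↥PiGrp →* Multiplicative (ℤ × ℤ))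
    (hsurj : Function.Surjective f)
    (hker : f.ker = commutator ↥PiGrp)
    (hf1 : f ⟨a1, a1_mem⟩ = Multiplicative.ofAdd (1, 3))
    (hf2 : f ⟨a2, a2_mem⟩ = Multiplicative.ofAdd (-2, 1))
    (hf3 : f ⟨a3, a3_mem⟩ = Multiplicative.ofAdd (-1, -1)) :
    ∀ π π' : ↥PiGrp, (π' : CS) = gj ^ 4 * (π : CS) * (gj ^ 4)⁻¹ →
      f π' = Multiplicative.ofAdd
        ((Multiplicative.toAdd (f π)).2,
          -(Multiplicative.toAdd (f π)).1 - (Multiplicative.toAdd (f π)).2) := by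
  -- Membership of `j⁴πj⁻⁴` in `Π` is carried along the induction together with the formula.
  have key : ∀ x (hx : x ∈ PiGrp), ∃ y : PiGrp,
      (y : CS) = gj ^ 4 * x * (gj ^ 4)⁻¹ ∧ f y = rot (f ⟨x, hx⟩) := by
    intro x hx
    unfold PiGrp at hx
    induction hx using Subgroup.closure_induction with
    | mem x hx =>
      rcases hx with rfl | rfl | rfl
      · let A1 : PiGrp := ⟨a1, a1_mem⟩
        let A2 : PiGrp := ⟨a2, a2_mem⟩
        let A3 : PiGrp := ⟨a3, a3_mem⟩
        refine ⟨A3 * (A2⁻¹ * (A2⁻¹ * (A2⁻¹ * (A3 * (A3 * (A3 * A1)))))), conj_a1.symm, ?_⟩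
        simp only [map_mul, map_inv, A1, A2, A3, hf1, hf2, hf3]
        rfl
      · refine ⟨(⟨a3, a3_mem⟩ : PiGrp)⁻¹, conj_a2.symm, ?_⟩
        rw [map_inv, hf3, hf2]
        rfl
      · let A1 : PiGrp := ⟨a1, a1_mem⟩
        let A2 : PiGrp := ⟨a2, a2_mem⟩
        let A3 : PiGrp := ⟨a3, a3_mem⟩
        refine ⟨A1⁻¹ * (A2⁻¹ * (A1 * (A2 * (A2 * (A1⁻¹ * (A2⁻¹ * (A1 * (A3⁻¹ *
          (A1⁻¹ * (A2 * A1)))))))))), conj_a3.symm, ?_⟩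
        simp only [map_mul, map_inv, A1, A2, A3, hf1, hf2, hf3]
        rfl
    | one => exact ⟨1, by simp, by rw [map_one]; exact (map_one (rot.comp f)).symm⟩
    | mul x y hx hy ihx ihy =>
      obtain ⟨x', hx', hfx⟩ := ihx
      obtain ⟨y', hy', hfy⟩ := ihy
      refine ⟨x' * y', by simp [hx', hy', mul_assoc], ?_⟩
      rw [map_mul, hfx, hfy]
      exact (map_mul (rot.comp f) ⟨x, hx⟩ ⟨y, hy⟩).symm
    | inv x hx ihx =>
      obtain ⟨x', hx', hfx⟩ := ihx
      refine ⟨x'⁻¹, by simp [hx', mul_assoc], ?_⟩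
      rw [map_inv, hfx]
      exact (map_inv (rot.comp f) ⟨x, hx⟩).symm
  intro π π' h
  obtain ⟨y, hy, hfy⟩ := key π π.2
  have hπ : π' = y := Subtype.ext (h.trans hy.symm)
  rw [hπ, hfy]
  rfl
end
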